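/- Let (Σ, σ) be a shift of finite type. Then for every real number c with 0 ≤ c < h_top(σ) there exists a compact σ-invariant subset Y_c ⊆ Σ such that σ|_{Y_c} is strictly ergodic and h_top(σ|_{Y_c}) = c; in particular, denoting by μ_c the unique invariant measure of σ|_{Y_c}, one has h_{μ_c}(σ) = c, so σ has entropy flexibility. -/

import Mathlib

/-!
The shift of finite type `S` is read through a conjugacy with a vertex shift (`Coding`). If its
entropy exceeds `c`, some vertex `b` carries more than `exp (c m)` loops of some length `m`
(`Coding.exists_loops`): otherwise, cutting paths at the first visit to their final vertex would show
that the number of paths grows at rate at most `c`.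

These loops are the words of level `0` of a hierarchy. The words of the next level are concatenations
of `M` words of the present one in which every word occurs with a prescribed multiplicity. By the
pigeonhole principle there are still more than `exp (c len)` of them for suitable `M` and
multiplicities, and all but `⌊exp (c len)⌋ + 1` are discarded (`exists_refinement`). The points whose
code is a concatenation of words of every level form a compact invariant set `D`, the `limitSet`.

* The entropy of `D` is at most `c`, by counting words (`Coding.entropy_limitSet_le`).
* Since all words of a level contain the words of the preceding level equally often, Birkhoff
  averages converge uniformly on `D` to a constant (`Coding.uniform_averages`). Hence `D` carries
  only one invariant probability measure `μ` (`Coding.unique_measure`), which is therefore ergodic,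
  and any minimal subset `Y` of `D` is strictly ergodic.
* The entropy of `μ` is at least `c`. The periodic points obtained by repeating a word of a deep level
  have block frequencies close to those of `μ`, by uniform convergence (`Coding.le_refinedInfo`). On
  the other hand Gibbs' inequality bounds the logarithm of the number of words by the block entropy
  per symbol times the length (`log_card_le`), and that logarithm exceeds `c len`.

The easy half of the variational principle (`measEntropy_le`), proved by a Gibbs-type comparison with
randomly misread itineraries of a spanning set, gives `c ≤ h_μ ≤ h_top(Y) ≤ h_top(D) ≤ c`. The pieces
are put together in `Coding.exists_strictlyErgodic`.
-/

open Filter MeasureTheory Set Topology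
open scoped ENNReal NNReal

attribute [local instance] PiCountable.metricSpace

namespace EF

/-! ### Topological entropy via separated sets -/

section Entropy

variable {M : Type*} [MetricSpace M]

/-- `Q` is an `(n,ε)`-separated set for `f`. -/
def IsDynSep (f : M → M) (n : ℕ) (ε : ℝ) (Q : Set M) : Prop :=
  Q.Pairwise fun x y => ∃ j : ℕ, j ≤ n ∧ ε < dist (f^[j] x) (f^[j] y)

/-- Maximal cardinality of an `(n,ε)`-separated subset of `K`. -/
noncomputable def sepCount (f : M → M) (K : Set M) (n : ℕ) (ε : ℝ) : ℕ :=
  sSup {k : ℕ | ∃ Q : Finset M, ↑Q ⊆ K ∧ IsDynSep f n ε ↑Q ∧ Q.card = k}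

/-- Topological entropy of `f` on the (not necessarily invariant) set `K`. -/
noncomputable def topEntropyOn (f : M → M) (K : Set M) : EReal :=
  ⨆ (ε : ℝ) (_ : 0 < ε),
    Filter.atTop.limsup fun n : ℕ => ((Real.log (sepCount f K n ε) / n : ℝ) : EReal)

/-- Topological entropy of `f`. -/
noncomputable def topEntropy (f : M → M) : EReal :=
  topEntropyOn f Set.univ

end Entropy

/-! ### Measure-theoretic (Kolmogorov–Sinai) entropy -/

section MeasEntropy

variable {α : Type*} [MeasurableSpace α]

/-- A finite measurable partition of the whole space. -/
def IsMeasPartition (P : Finset (Set α)) : Prop :=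
  (∀ p ∈ P, MeasurableSet p) ∧ ⋃₀ (↑P : Set (Set α)) = Set.univ ∧
    (↑P : Set (Set α)).Pairwise Disjoint

/-- The function `x ↦ - x log x`. -/
noncomputable def negMulLog (x : ℝ) : ℝ := -(x * Real.log x)

/-- Information of the refinement `P ∨ f⁻¹ P ∨ ⋯ ∨ f⁻⁽ⁿ⁻¹⁾ P` with respect to `μ`. -/
noncomputable def refinedInfo (f : α → α) (μ : Measure α) (P : Finset (Set α)) (n : ℕ) : ℝ :=
  ∑ a : Fin n → {p // p ∈ P},
    negMulLog (μ (⋂ i : Fin n, f^[(i : ℕ)] ⁻¹' ((a i : Set α)))).toReal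

/-- Entropy of `f` w.r.t. `μ` and the partition `P`. -/
noncomputable def partEntropy (f : α → α) (μ : Measure α) (P : Finset (Set α)) : ℝ :=
  Filter.atTop.limsup fun n : ℕ => refinedInfo f μ P n / n

/-- Kolmogorov–Sinai entropy of `f` with respect to `μ`. -/
noncomputable def measEntropy (f : α → α) (μ : Measure α) : EReal :=
  ⨆ (P : Finset (Set α)) (_ : IsMeasPartition P), ((partEntropy f μ P : ℝ) : EReal)

end MeasEntropy

/-! ### Discrete-time dynamics -/

section Discrete

variable {M : Type*} [MetricSpace M]

/-- A set invariant under `f`. -/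
def InvSet (f : M → M) (Λ : Set M) : Prop := f '' Λ = Λ

/-- `f` is minimal on the invariant set `Λ`. -/
def MinimalOn (f : M → M) (Λ : Set M) : Prop :=
  ∀ K : Set M, K ⊆ Λ → K.Nonempty → IsClosed K → f '' K = K → K = Λ

variable [MeasurableSpace M]

/-- `f` is uniquely ergodic on `Λ`: there is exactly one invariant Borel probability
measure supported in `Λ`. -/
def UniquelyErgodicOn (f : M → M) (Λ : Set M) : Prop :=
  ∃! μ : Measure M, IsProbabilityMeasure μ ∧ MeasurePreserving f μ μ ∧ μ Λᶜ = 0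

/-- `f` is strictly ergodic on `Λ`: minimal and uniquely ergodic. -/
def StrictlyErgodicOn (f : M → M) (Λ : Set M) : Prop :=
  MinimalOn f Λ ∧ UniquelyErgodicOn f Λ

/-- Entropy flexibility of `f` on an invariant set `S`. -/
def EntropyFlexibleOn (f : M → M) (S : Set M) : Prop :=
  ∀ c : ℝ, 0 ≤ c → (c : EReal) < topEntropyOn f S →
    ∃ (μ : Measure M) (Λ : Set M), IsProbabilityMeasure μ ∧ Ergodic f μ ∧ μ Sᶜ = 0 ∧
      Λ ⊆ S ∧ IsCompact Λ ∧ f '' Λ = Λ ∧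
      topEntropyOn f Λ = (c : EReal) ∧ measEntropy f μ = (c : EReal)

/-- Entropy flexibility of `f` (on the whole space). -/
def EntropyFlexible (f : M → M) : Prop :=
  ∀ c : ℝ, 0 ≤ c → (c : EReal) < topEntropy f →
    ∃ (μ : Measure M) (Λ : Set M), IsProbabilityMeasure μ ∧ Ergodic f μ ∧
      IsCompact Λ ∧ f '' Λ = Λ ∧
      topEntropyOn f Λ = (c : EReal) ∧ measEntropy f μ = (c : EReal)

end Discrete

/-! ### Shadowing and expansiveness (discrete time) -/

section Shadowing

variable {M : Type*} [MetricSpace M]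

/-- The shadowing property for a homeomorphism `f` (full orbits indexed by `ℤ`,
encoded via orbit functions `z` with `z (n+1) = f (z n)`). -/
def ShadowingProperty (f : M → M) : Prop :=
  ∀ ε : ℝ, 0 < ε → ∃ δ : ℝ, 0 < δ ∧ ∀ x : ℤ → M,
    (∀ n : ℤ, dist (f (x n)) (x (n + 1)) ≤ δ) →
    ∃ z : ℤ → M, (∀ n : ℤ, z (n + 1) = f (z n)) ∧ ∀ n : ℤ, dist (z n) (x n) ≤ ε

/-- The shadowing property relative to an invariant set `Λ`. -/
def ShadowingOn (f : M → M) (Λ : Set M) : Prop :=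
  ∀ ε : ℝ, 0 < ε → ∃ δ : ℝ, 0 < δ ∧ ∀ x : ℤ → M, (∀ n : ℤ, x n ∈ Λ) →
    (∀ n : ℤ, dist (f (x n)) (x (n + 1)) ≤ δ) →
    ∃ z : ℤ → M, (∀ n : ℤ, z n ∈ Λ) ∧ (∀ n : ℤ, z (n + 1) = f (z n)) ∧
      ∀ n : ℤ, dist (z n) (x n) ≤ ε

/-- Expansiveness of a homeomorphism, phrased via full orbit functions. -/
def Expansive (f : M → M) : Prop :=
  ∃ e : ℝ, 0 < e ∧ ∀ z w : ℤ → M,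
    (∀ n : ℤ, z (n + 1) = f (z n)) → (∀ n : ℤ, w (n + 1) = f (w n)) →
    (∀ n : ℤ, dist (z n) (w n) ≤ e) → z 0 = w 0

/-- Topological transitivity of `f` on `Λ`. -/
def TransitiveOn (f : M → M) (Λ : Set M) : Prop :=
  ∀ U V : Set M, IsOpen U → IsOpen V → (U ∩ Λ).Nonempty → (V ∩ Λ).Nonempty →
    ∃ n : ℕ, 0 < n ∧ ((f^[n] '' (U ∩ Λ)) ∩ V).Nonempty

end Shadowing

/-! ### Continuous-time dynamics -/

section Flows

variable {M : Type*} [MetricSpace M]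

/-- A set invariant under all time-`t` maps of the flow. -/
def FlowInvSet (φ : Flow ℝ M) (Λ : Set M) : Prop := ∀ t : ℝ, φ.toFun t '' Λ = Λ

/-- Topological entropy of a flow on a set: entropy of its time-one map. -/
noncomputable def flowTopEntropyOn (φ : Flow ℝ M) (K : Set M) : EReal :=
  topEntropyOn (φ.toFun 1) K

/-- Topological entropy of a flow: the entropy of its time-one map. -/
noncomputable def flowTopEntropy (φ : Flow ℝ M) : EReal := topEntropy (φ.toFun 1)

/-- Minimality of a flow on `Λ`. -/
def FlowMinimalOn (φ : Flow ℝ M) (Λ : Set M) : Prop :=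
  ∀ K : Set M, K ⊆ Λ → K.Nonempty → IsClosed K → (∀ t : ℝ, φ.toFun t '' K = K) → K = Λ

variable [MeasurableSpace M]

/-- An invariant measure for a flow. -/
def FlowInvariant (φ : Flow ℝ M) (μ : Measure M) : Prop :=
  ∀ t : ℝ, MeasurePreserving (φ.toFun t) μ μ

/-- An ergodic measure for a flow. -/
def FlowErgodic (φ : Flow ℝ M) (μ : Measure M) : Prop :=
  FlowInvariant φ μ ∧
    ∀ s : Set M, MeasurableSet s → (∀ t : ℝ, φ.toFun t ⁻¹' s = s) → μ s = 0 ∨ μ s = 1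

/-- Measure-theoretic entropy of a flow: entropy of the time-one map. -/
noncomputable def flowMeasEntropy (φ : Flow ℝ M) (μ : Measure M) : EReal :=
  measEntropy (φ.toFun 1) μ

/-- Unique ergodicity of a flow on `Λ`. -/
def FlowUniquelyErgodicOn (φ : Flow ℝ M) (Λ : Set M) : Prop :=
  ∃! μ : Measure M, IsProbabilityMeasure μ ∧ FlowInvariant φ μ ∧ μ Λᶜ = 0

/-- Strict ergodicity of a flow on `Λ`. -/
def FlowStrictlyErgodicOn (φ : Flow ℝ M) (Λ : Set M) : Prop :=
  FlowMinimalOn φ Λ ∧ FlowUniquelyErgodicOn φ Λ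

/-- Entropy flexibility for flows. -/
def FlowEntropyFlexible (φ : Flow ℝ M) : Prop :=
  ∀ c : ℝ, 0 ≤ c → (c : EReal) < flowTopEntropy φ →
    ∃ (μ : Measure M) (Λ : Set M), IsProbabilityMeasure μ ∧ FlowErgodic φ μ ∧
      IsCompact Λ ∧ FlowInvSet φ Λ ∧
      flowTopEntropyOn φ Λ = (c : EReal) ∧ flowMeasEntropy φ μ = (c : EReal)

end Flows

/-! ### Suspension flows -/

section Suspension

variable {X : Type*} [MetricSpace X] {Λ : Type*} [MetricSpace Λ]

/-- `φ` (a flow on `Λ`) is, on the subset `Γ ⊆ Λ`, the suspension flow of the base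
map `f` restricted to `S ⊆ X` under the roof function `ρ`, witnessed by the
embedding `e : X → Λ` of the base. This characterizes the quotient of `S × ℝ` by
`(x, ρ x) ∼ (f x, 0)` with the unit-speed vertical flow. -/
def IsSuspensionOn (f : X → X) (S : Set X) (ρ : X → ℝ) (φ : Flow ℝ Λ) (Γ : Set Λ) : Prop :=
  ∃ e : X → Λ, ContinuousOn e S ∧ (∀ x ∈ S, e x ∈ Γ) ∧
    (∀ x ∈ S, φ.toFun (ρ x) (e x) = e (f x)) ∧
    (∀ z ∈ Γ, ∃ x ∈ S, ∃ s : ℝ, 0 ≤ s ∧ s < ρ x ∧ φ.toFun s (e x) = z) ∧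
    (∀ x ∈ S, ∀ y ∈ S, ∀ s u : ℝ, 0 ≤ s → s < ρ x → 0 ≤ u → u < ρ y →
      φ.toFun s (e x) = φ.toFun u (e y) → x = y ∧ s = u)

end Suspension

/-! ### Symbolic dynamics -/

section Symbolic

/-- The full shift map on `ℤ → A`. -/
def fullShift (A : Type*) : (ℤ → A) → (ℤ → A) := fun x i => x (i + 1)

variable {A : Type*} [MetricSpace A]

/-- A subshift: a closed shift-invariant subset of the full shift. -/
def IsSubshift (S : Set (ℤ → A)) : Prop :=
  IsClosed S ∧ fullShift A '' S = S

/-- The vertex shift determined by a transition relation `Adj`. -/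
def vertexShift {B : Type*} (Adj : B → B → Prop) : Set (ℤ → B) :=
  {x | ∀ i : ℤ, Adj (x i) (x (i + 1))}

/-- A topological conjugacy between two shift spaces (over possibly different
alphabets): a homeomorphism of the subspaces intertwining the shift maps. -/
def ShiftConj {B : Type*} [mB : MetricSpace B] (S : Set (ℤ → A)) (T : Set (ℤ → B)) : Prop :=
  ∃ h : ↥S ≃ₜ ↥T, ∀ x y : ↥S, (y : ℤ → A) = fullShift A (x : ℤ → A) →
    ((h y : ℤ → B)) = fullShift B ((h x : ℤ → B))

/-- A subshift of finite type: a subshift topologically conjugate to a vertex shift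
over some finite alphabet. -/
def IsSFT [Fintype A] (S : Set (ℤ → A)) : Prop :=
  IsSubshift S ∧ ∃ (B : Type) (_ : Fintype B) (mB : MetricSpace B) (Adj : B → B → Prop),
    @ShiftConj A _ B mB S (vertexShift Adj)

/-- The word `w` occurs in some point of `S`. -/
def occursIn (w : List A) (S : Set (ℤ → A)) : Prop :=
  ∃ x ∈ S, ∃ a : ℤ, ∀ i : Fin w.length, x (a + (i : ℕ)) = w.get i

/-- The words of length `s` in the language of `S`. -/
def langOf (s : ℕ) (S : Set (ℤ → A)) : Set (List A) :=
  {w | w.length = s ∧ occursIn w S}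

/-- `r` is a parsing of `x` into words from `𝒲`. -/
def ParsesAt (x : ℤ → A) (𝒲 : Finset (List A)) (r : ℤ → ℤ) : Prop :=
  ∀ j : ℤ, ∃ w ∈ 𝒲, r (j + 1) = r j + w.length ∧
    ∀ i : Fin w.length, x (r j + (i : ℕ)) = w.get i

/-- The renewal system over a finite set of words `𝒲`: all bi-infinite free
concatenations of words from `𝒲`. -/
def renewalSet (𝒲 : Finset (List A)) : Set (ℤ → A) :=
  {x | ∃ r : ℤ → ℤ, ParsesAt x 𝒲 r}

end Symbolic

/-! ### Horseshoes for flows -/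

section Horseshoe

variable {M : Type*} [MetricSpace M]

/-- Auxiliary: `Λ` is a horseshoe of `φ` with symbol space `B`. -/
def HorseshoeWitness (φ : Flow ℝ M) (Λ : Set M) (B : Type) [Fintype B] [MetricSpace B] : Prop :=
  2 ≤ Fintype.card B ∧ ∃ ρ : (ℤ → B) → ℝ, Continuous ρ ∧ (∀ x, 0 < ρ x) ∧
    IsSuspensionOn (fullShift B) Set.univ ρ φ Λ

/-- A horseshoe of a flow: a compact invariant set on which the flow is conjugate to
a suspension flow over a full shift on at least two symbols. -/
def IsHorseshoe (φ : Flow ℝ M) (Λ : Set M) : Prop :=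
  ∃ (B : Type) (iB : Fintype B) (mB : MetricSpace B), @HorseshoeWitness M _ φ Λ B iB mB

end Horseshoe

/-! ### The metric on measures and empirical measures -/

section MeasMetric

variable {M : Type*} [MetricSpace M] [MeasurableSpace M]

/-- The metric `𝔡` on Borel (probability) measures determined by a sequence of test
functions `Φ`. -/
noncomputable def measDist (Φ : ℕ → M → ℝ) (μ ν : Measure M) : ℝ :=
  ∑' n : ℕ, (1 / 2 : ℝ) ^ (n + 1) * |(∫ x, Φ n x ∂μ) - ∫ x, Φ n x ∂ν|

/-- A sequence of test functions with `‖Φ n‖_∞ + Lip (Φ n) ≤ 1`, dense in `C(M,ℝ)`. -/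
def GoodTestSeq (Φ : ℕ → M → ℝ) : Prop :=
  (∀ n : ℕ, ∃ C K : ℝ, 0 ≤ C ∧ 0 ≤ K ∧ C + K ≤ 1 ∧ (∀ x, |Φ n x| ≤ C) ∧
    ∀ x y, |Φ n x - Φ n y| ≤ K * dist x y) ∧
  ∀ g : M → ℝ, Continuous g → ∀ ε : ℝ, 0 < ε → ∃ n : ℕ, ∀ x, |g x - Φ n x| < ε

/-- The `n`-th empirical measure of the point `x` for the map `f`. -/
noncomputable def empMeasure (f : M → M) (n : ℕ) (x : M) : Measure M :=
  (n : ℝ≥0∞)⁻¹ • ∑ j ∈ Finset.range n, Measure.dirac (f^[j] x)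

/-- The topological support of a measure. -/
def measSupport (μ : Measure M) : Set M :=
  {x | ∀ U : Set M, IsOpen U → x ∈ U → 0 < μ U}

/-- A measure of maximal entropy of `f` on `Λ`. -/
def IsMaxEntropyMeasureOn (f : M → M) (Λ : Set M) (μ : Measure M) : Prop :=
  IsProbabilityMeasure μ ∧ MeasurePreserving f μ μ ∧ μ Λᶜ = 0 ∧
    measEntropy f μ = topEntropyOn f Λ

end MeasMetric

/-! ### Flow shadowing and expansiveness -/

section FlowShadow

variable {M : Type*} [MetricSpace M]

/-- Bowen–Walters expansiveness for flows. -/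
def FlowExpansive (φ : Flow ℝ M) : Prop :=
  ∀ ε : ℝ, 0 < ε → ∃ δ : ℝ, 0 < δ ∧ ∀ x y : M, ∀ s : ℝ → ℝ, Continuous s → s 0 = 0 →
    (∀ t : ℝ, dist (φ.toFun t x) (φ.toFun (s t) y) ≤ δ) →
    ∃ τ : ℝ, |τ| ≤ ε ∧ y = φ.toFun τ x

/-- The shadowing property for flows: every `(δ,1)`-pseudo-orbit is `ε`-traced,
up to an orientation preserving reparametrization of time, by a true orbit. -/
def FlowShadowing (φ : Flow ℝ M) : Prop :=
  ∀ ε : ℝ, 0 < ε → ∃ δ : ℝ, 0 < δ ∧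
    ∀ (x : ℤ → M) (T S : ℤ → ℝ), (∀ i : ℤ, 1 ≤ T i) →
      (∀ i : ℤ, dist (φ.toFun (T i) (x i)) (x (i + 1)) ≤ δ) →
      S 0 = 0 → (∀ i : ℤ, S (i + 1) = S i + T i) →
      ∃ (z : M) (h : ℝ → ℝ), StrictMono h ∧ Continuous h ∧ Function.Surjective h ∧
        ∀ i : ℤ, ∀ t : ℝ, S i ≤ t → t < S (i + 1) →
          dist (φ.toFun (h t) z) (φ.toFun (t - S i) (x i)) ≤ ε

end FlowShadow


/-! ### Lift of a measure to a suspension flow -/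

section Lift

variable {X : Type*} [MeasurableSpace X] {Y : Type*} [TopologicalSpace Y] [MeasurableSpace Y]

/-- The lift of a base measure `ν` to the suspension flow `φ` with roof `ρ`,
via the base embedding `e`: the normalized image of `ν ⊗ Leb` on the region
below the roof. -/
noncomputable def suspLift (φ : Flow ℝ Y) (e : X → Y) (ρ : X → ℝ) (ν : Measure X) :
    Measure Y :=
  (ENNReal.ofReal (∫ x, ρ x ∂ν))⁻¹ •
    Measure.map (fun p : X × ℝ => φ.toFun p.2 (e p.1))
      ((ν.prod (volume : Measure ℝ)).restrict {p : X × ℝ | 0 ≤ p.2 ∧ p.2 < ρ p.1})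

end Lift


end EF
open EF

namespace EFProof

/-! ### Minimal sets and invariant measures -/

/-- Zorn's lemma; injectivity of `f` makes the intersection of a chain of invariant sets invariant. -/
theorem exists_minimal_subset {X : Type*} [MetricSpace X] [CompactSpace X] (f : X → X)
    (hf : Function.Injective f) (D : Set X) (hD : IsClosed D) (hne : D.Nonempty)
    (hinv : f '' D = D) :
    ∃ Y ⊆ D, Y.Nonempty ∧ IsClosed Y ∧ f '' Y = Y ∧ MinimalOn f Y := by
  obtain ⟨Y, hYD, hY⟩ := zorn_superset_nonempty
    {K : Set X | K.Nonempty ∧ IsClosed K ∧ f '' K = K} (by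
      intro C hC hchain hCne
      refine ⟨⋂₀ C, ⟨?_, ?_, ?_⟩, fun s hs => sInter_subset_of_mem hs⟩
      · have : Nonempty C := hCne.to_subtype
        exact IsCompact.nonempty_sInter_of_directed_nonempty_isCompact_isClosed
          (S := C) (by
            intro K hK L hL
            rcases hchain.total hK hL with h | h
            · exact ⟨K, hK, subset_rfl, h⟩
            · exact ⟨L, hL, h, subset_rfl⟩) (fun K hK => (hC hK).1)
          (fun K hK => (hC hK).2.1.isCompact) (fun K hK => (hC hK).2.1)
      · exact isClosed_sInter fun K hK => (hC hK).2.1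
      · apply Set.Subset.antisymm
        · rintro _ ⟨x, hx, rfl⟩ K hK
          rw [← (hC hK).2.2]
          exact ⟨x, hx K hK, rfl⟩
        · intro x hx
          obtain ⟨K₀, hK₀⟩ := hCne
          have hx0 := hx K₀ hK₀
          rw [← (hC hK₀).2.2] at hx0
          obtain ⟨y, -, rfl⟩ := hx0
          refine ⟨y, fun K hK => ?_, rfl⟩
          have hx1 := hx K hK
          rw [← (hC hK).2.2] at hx1
          exact (hf.mem_set_image).1 hx1) D ⟨hne, hD, hinv⟩
  refine ⟨Y, hYD, hY.prop.1, hY.prop.2.1, hY.prop.2.2, ?_⟩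
  intro K hK hKne hKc hKi
  exact Set.Subset.antisymm hK (hY.le_of_le ⟨hKne, hKc, hKi⟩ hK)

/-- If `μ` is the only invariant probability measure carried by `Y`, it is ergodic: conditioning it on
an invariant set of positive measure gives another such measure, hence `μ` itself. -/
theorem ergodic_of_unique {X : Type*} [MeasurableSpace X] (f : X → X) (Y : Set X)
    (μ : Measure X) [IsProbabilityMeasure μ] (hμ : MeasurePreserving f μ μ) (hY : μ Yᶜ = 0)
    (huniq : ∀ ν : Measure X, IsProbabilityMeasure ν → MeasurePreserving f ν ν → ν Yᶜ = 0 → ν = μ) :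
    Ergodic f μ := by
  refine { hμ with aeconst_set := ?_ }
  intro s hs hfs
  by_cases h0 : μ s = 0
  · exact eventuallyConst_set'.2 (Or.inl (by simpa [ae_eq_empty] using h0))
  · have hν : ProbabilityTheory.cond μ s = μ := by
      apply huniq
      · exact ProbabilityTheory.cond_isProbabilityMeasure h0
      · refine ⟨hμ.measurable, ?_⟩
        have h1 := hμ.restrict_preimage hs
        rw [hfs] at h1
        rw [ProbabilityTheory.cond, Measure.map_smul, h1.map_eq]
      · exact ProbabilityTheory.cond_absolutelyContinuous hY
    refine eventuallyConst_set'.2 (Or.inr ?_)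
    rw [eventuallyEq_univ, mem_ae_iff]
    have : ProbabilityTheory.cond μ s sᶜ = 0 := by
      rw [ProbabilityTheory.cond_apply hs]; simp
    rwa [hν] at this

/-- The theorem of Krylov and Bogolyubov: a cluster point of the empirical measures of a point of `Y`
is invariant and carried by `Y`. -/
theorem exists_invariant_measure {X : Type*} [MetricSpace X] [CompactSpace X] [MeasurableSpace X]
    [BorelSpace X] (f : X → X) (hf : Continuous f) (Y : Set X) (hY : IsClosed Y)
    (hne : Y.Nonempty) (hinv : f '' Y = Y) :
    ∃ μ : Measure X, IsProbabilityMeasure μ ∧ MeasurePreserving f μ μ ∧ μ Yᶜ = 0 := by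
  obtain ⟨x, hx⟩ := hne
  have hit : ∀ n, f^[n] x ∈ Y := by
    intro n
    induction n with
    | zero => exact hx
    | succ n ih => rw [Function.iterate_succ_apply']; rw [← hinv]; exact ⟨_, ih, rfl⟩
  have hprob : ∀ n : ℕ, IsProbabilityMeasure (empMeasure f (n + 1) x) := by
    intro n
    constructor
    simp only [empMeasure, Measure.smul_apply, Measure.coe_finsetSum, Finset.sum_apply,
      measure_univ, Finset.sum_const, Finset.card_range, smul_eq_mul, nsmul_eq_mul, mul_one]
    exact ENNReal.inv_mul_cancel (by simp) (by simp)
  let P : ℕ → ProbabilityMeasure X := fun n => ⟨empMeasure f (n + 1) x, hprob n⟩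
  have hInt : ∀ (n : ℕ) (g : C(X, ℝ)), ∫ y, g y ∂(P n : Measure X) =
      ((n : ℝ) + 1)⁻¹ * ∑ j ∈ Finset.range (n + 1), g (f^[j] x) := by
    intro n g
    change ∫ y, g y ∂(empMeasure f (n + 1) x) = _
    rw [empMeasure, integral_smul_measure, integral_finsetSum_measure]
    · simp [ENNReal.toReal_inv, ENNReal.toReal_add]
    · intro i _
      exact integrable_dirac (by simp)
  obtain ⟨μ, -, hcl⟩ := isCompact_univ.exists_mapClusterPt (f := atTop) (u := P) (by simp)
  have hcl' : ∀ g : C(X, ℝ), ∀ a : ℝ, Tendsto (fun n => ∫ y, g y ∂(P n : Measure X)) atTop (𝓝 a) →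
      ∫ y, g y ∂(μ : Measure X) = a := by
    intro g a ha
    have hc : Continuous fun ν : ProbabilityMeasure X => ∫ y, g y ∂(ν : Measure X) :=
      ProbabilityMeasure.continuous_integral_continuousMap g
    have := hcl.continuousAt_comp hc.continuousAt
    exact eq_of_nhds_neBot (ClusterPt.mono this ha)
  refine ⟨μ, inferInstance, ?_, ?_⟩
  · refine ⟨hf.measurable, ?_⟩
    have : IsProbabilityMeasure (Measure.map f (μ : Measure X)) :=
      Measure.isProbabilityMeasure_map hf.measurable.aemeasurable
    apply ext_of_forall_integral_eq_of_IsFiniteMeasure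
    intro g
    rw [integral_map hf.measurable.aemeasurable (by fun_prop)]
    -- The empirical averages of the coboundary `g ∘ f - g` telescope.
    let G : C(X, ℝ) := ⟨fun y => g (f y) - g y, by fun_prop⟩
    have hG : ∫ y, G y ∂(μ : Measure X) = 0 := by
      apply hcl'
      have : ∀ n, ∫ y, G y ∂(P n : Measure X) = ((n : ℝ) + 1)⁻¹ * (g (f^[n+1] x) - g x) := by
        intro n
        rw [hInt]
        congr 1
        have : ∀ j, G (f^[j] x) = g (f^[j+1] x) - g (f^[j] x) := by
          intro j; simp [G, Function.iterate_succ_apply']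
        simp only [this]
        rw [Finset.sum_range_sub (fun j => g (f^[j] x))]
        simp
      simp only [this]
      have h1 : Tendsto (fun n : ℕ => ((n : ℝ) + 1)⁻¹) atTop (𝓝 0) := by
        simpa using tendsto_one_div_add_atTop_nhds_zero_nat (𝕜 := ℝ)
      refine Tendsto.zero_mul_isBoundedUnder_le h1 ?_
      refine ⟨2 * ‖g‖, ?_⟩
      simp only [eventually_map, Function.comp]
      refine Eventually.of_forall fun n => ?_
      calc ‖g (f^[n+1] x) - g x‖ ≤ ‖g (f^[n+1] x)‖ + ‖g x‖ := norm_sub_le _ _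
        _ ≤ ‖g‖ + ‖g‖ := add_le_add (g.norm_coe_le_norm _) (g.norm_coe_le_norm _)
        _ = _ := by ring
    have hi : ∀ k : X → ℝ, Continuous k → Integrable k (μ : Measure X) := by
      intro k hk
      exact hk.integrable_of_hasCompactSupport (HasCompactSupport.of_compactSpace k)
    have h2 : ∫ y, (g (f y) - g y) ∂(μ : Measure X) = 0 := hG
    rw [integral_sub (hi _ (by fun_prop)) (hi _ (by fun_prop))] at h2
    linarith
  -- The distance to `Y` vanishes along the orbit, so its integral against `μ` is `0`.
  · let G : C(X, ℝ) := ⟨fun y => Metric.infDist y Y, Metric.continuous_infDist_pt Y⟩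
    have hG : ∫ y, G y ∂(μ : Measure X) = 0 := by
      apply hcl'
      have : ∀ n, ∫ y, G y ∂(P n : Measure X) = 0 := by
        intro n
        rw [hInt]
        have : ∀ j, G (f^[j] x) = 0 := fun j => Metric.infDist_zero_of_mem (hit j)
        simp [this]
      simp [this]
    rw [integral_eq_zero_iff_of_nonneg (f := G) (fun y => Metric.infDist_nonneg)
      (G.continuous.integrable_of_hasCompactSupport (HasCompactSupport.of_compactSpace _))] at hG
    rw [measure_eq_zero_iff_ae_notMem]
    filter_upwards [hG] with y hy
    simp only [mem_compl_iff, not_not]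
    exact (hY.mem_iff_infDist_zero ⟨x, hx⟩).2 hy

/-! ### Entropy of partitions -/

/-- Gibbs' inequality, with the second weight allowed to be a subprobability. -/
theorem gibbs {ι : Type*} [Fintype ι] (p q : ι → ℝ) (hp : ∀ i, 0 ≤ p i) (hp1 : ∑ i, p i = 1)
    (hq : ∀ i, 0 < q i) (hq1 : ∑ i, q i ≤ 1) :
    ∑ i, EF.negMulLog (p i) ≤ ∑ i, p i * (-Real.log (q i)) := by
  have key : ∀ i, EF.negMulLog (p i) ≤ p i * (-Real.log (q i)) + (q i - p i) := by
    intro i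
    unfold EF.negMulLog
    rcases (hp i).eq_or_lt with h | h
    · simp [← h, (hq i).le]
    · have h1 := Real.log_le_sub_one_of_pos (div_pos (hq i) h)
      rw [Real.log_div (hq i).ne' h.ne'] at h1
      have h2 := mul_le_mul_of_nonneg_left h1 h.le
      have h3 : p i * (q i / p i - 1) = q i - p i := by field_simp
      nlinarith
  calc ∑ i, EF.negMulLog (p i) ≤ ∑ i, (p i * (-Real.log (q i)) + (q i - p i)) :=
        Finset.sum_le_sum fun i _ => key i
    _ = ∑ i, p i * (-Real.log (q i)) + (∑ i, q i - 1) := by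
        rw [Finset.sum_add_distrib, Finset.sum_sub_distrib, hp1]
    _ ≤ _ := by linarith

section Names

variable {X : Type*} [MeasurableSpace X] {P : Finset (Set X)}

/-- The map sending a point to the partition element that contains it. -/
theorem exists_name (hP : IsMeasPartition P) :
    ∃ name : X → {p // p ∈ P}, ∀ x (p : {p // p ∈ P}), x ∈ p.1 ↔ name x = p := by
  have h : ∀ x, ∃ p : {p // p ∈ P}, x ∈ p.1 := by
    intro x
    have : x ∈ ⋃₀ (↑P : Set (Set X)) := by rw [hP.2.1]; trivial
    obtain ⟨p, hp, hx⟩ := this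
    exact ⟨⟨p, hp⟩, hx⟩
  choose name hname using h
  refine ⟨name, fun x p => ⟨fun hx => ?_, fun hx => hx ▸ hname x⟩⟩
  by_contra hne
  have hd := hP.2.2 (name x).2 p.2 (fun h => hne (Subtype.ext h))
  exact Set.disjoint_left.1 hd (hname x) hx

/-- The length-`n` itinerary of `x` under `f`, read through the labelling `name`. -/
def itin {κ : Type*} (f : X → X) (name : X → κ) (n : ℕ) (x : X) : Fin n → κ :=
  fun i => name (f^[(i : ℕ)] x)

theorem cyl_eq {name : X → {p // p ∈ P}} (hname : ∀ x (p : {p // p ∈ P}), x ∈ p.1 ↔ name x = p)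
    (f : X → X) (n : ℕ) (a : Fin n → {p // p ∈ P}) :
    (⋂ i : Fin n, f^[(i : ℕ)] ⁻¹' ((a i : Set X))) = {x | itin f name n x = a} := by
  ext x
  simp only [mem_iInter, mem_preimage, mem_ofPred_eq, hname, itin, funext_iff]

theorem measurableSet_cyl (hP : IsMeasPartition P) {f : X → X} (hf : Measurable f) (n : ℕ)
    (a : Fin n → {p // p ∈ P}) :
    MeasurableSet (⋂ i : Fin n, f^[(i : ℕ)] ⁻¹' ((a i : Set X))) :=
  MeasurableSet.iInter fun i => hf.iterate _ (hP.1 _ (a i).2)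

/-- The measures of the cylinders are the distribution of the itinerary. -/
theorem integral_itin (hP : IsMeasPartition P) {name : X → {p // p ∈ P}}
    (hname : ∀ x (p : {p // p ∈ P}), x ∈ p.1 ↔ name x = p) {f : X → X} (hf : Measurable f)
    (μ : Measure X) [IsProbabilityMeasure μ] (n : ℕ) (φ : (Fin n → {p // p ∈ P}) → ℝ) :
    Integrable (fun x => φ (itin f name n x)) μ ∧
    ∑ a, (μ (⋂ i : Fin n, f^[(i : ℕ)] ⁻¹' ((a i : Set X)))).toReal * φ a
      = ∫ x, φ (itin f name n x) ∂μ := by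
  classical
  have hrep : ∀ x, φ (itin f name n x) = ∑ a : Fin n → {p // p ∈ P},
      (⋂ i : Fin n, f^[(i : ℕ)] ⁻¹' ((a i : Set X))).indicator (fun _ => φ a) x := by
    intro x
    simp only [cyl_eq hname, indicator_apply, mem_ofPred_eq]
    simp
  have hInt : ∀ a : Fin n → {p // p ∈ P}, Integrable
      ((⋂ i : Fin n, f^[(i : ℕ)] ⁻¹' ((a i : Set X))).indicator (fun _ => φ a)) μ :=
    fun a => (integrable_const _).indicator (measurableSet_cyl hP hf n a)
  have hrep' : (fun x => φ (itin f name n x)) = fun x => ∑ a : Fin n → {p // p ∈ P},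
      (⋂ i : Fin n, f^[(i : ℕ)] ⁻¹' ((a i : Set X))).indicator (fun _ => φ a) x := funext hrep
  constructor
  · rw [hrep']
    exact integrable_finsetSum _ fun a _ => hInt a
  · rw [hrep', integral_finsetSum _ fun a _ => hInt a]
    refine Finset.sum_congr rfl fun a _ => ?_
    rw [integral_indicator_const _ (measurableSet_cyl hP hf n a)]
    simp [Measure.real]

theorem sum_cyl (hP : IsMeasPartition P) {f : X → X} (hf : Measurable f)
    (μ : Measure X) [IsProbabilityMeasure μ] (n : ℕ) :
    ∑ a : Fin n → {p // p ∈ P}, (μ (⋂ i : Fin n, f^[(i : ℕ)] ⁻¹' ((a i : Set X)))).toReal = 1 := by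
  obtain ⟨name, hname⟩ := exists_name hP
  have := (integral_itin hP hname hf μ n fun _ => 1).2
  simpa using this

theorem refinedInfo_nonneg (f : X → X) (μ : Measure X) [IsProbabilityMeasure μ] (n : ℕ) :
    0 ≤ refinedInfo f μ P n := by
  refine Finset.sum_nonneg fun a _ => ?_
  unfold EF.negMulLog
  have := Real.log_nonpos (x := (μ (⋂ i : Fin n, f^[(i : ℕ)] ⁻¹' ((a i : Set X)))).toReal)
    ENNReal.toReal_nonneg (by
      simpa using ENNReal.toReal_mono ENNReal.one_ne_top (prob_le_one (μ := μ)
        (s := ⋂ i : Fin n, f^[(i : ℕ)] ⁻¹' ((a i : Set X)))))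
  have h0 : 0 ≤ (μ (⋂ i : Fin n, f^[(i : ℕ)] ⁻¹' ((a i : Set X)))).toReal :=
    ENNReal.toReal_nonneg
  nlinarith

theorem refinedInfo_le_card (hP : IsMeasPartition P) {f : X → X} (hf : Measurable f)
    (μ : Measure X) [IsProbabilityMeasure μ] (n : ℕ) :
    refinedInfo f μ P n ≤ n * Real.log P.card := by
  classical
  obtain ⟨x0⟩ : Nonempty X := nonempty_of_isProbabilityMeasure μ
  obtain ⟨name, hname⟩ := exists_name hP
  have hpos : 0 < P.card := Finset.card_pos.2 ⟨_, (name x0).2⟩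
  have hpos' : (0 : ℝ) < P.card := by exact_mod_cast hpos
  have h := gibbs (fun a : Fin n → {p // p ∈ P} =>
    (μ (⋂ i : Fin n, f^[(i : ℕ)] ⁻¹' ((a i : Set X)))).toReal)
    (fun _ => ((P.card : ℝ) ^ n)⁻¹) (fun _ => ENNReal.toReal_nonneg) (sum_cyl hP hf μ n)
    (fun _ => by positivity) (by simp [hpos'.ne'])
  refine h.trans (le_of_eq ?_)
  rw [← Finset.sum_mul, sum_cyl hP hf μ n, Real.log_inv, Real.log_pow]
  ring

end Names

/-! ### The easy half of the variational principle -/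

/-- A separated set of maximal cardinality is spanning. -/
theorem exists_spanning {X : Type*} [MetricSpace X] (f : X → X) (Y : Set X) (n : ℕ) {ε : ℝ}
    (hb : BddAbove {k : ℕ | ∃ Q : Finset X, ↑Q ⊆ Y ∧ IsDynSep f n ε ↑Q ∧ Q.card = k}) :
    ∃ Q : Finset X, ↑Q ⊆ Y ∧ Q.card = sepCount f Y n ε ∧
      ∀ y ∈ Y, ∃ z ∈ Q, ∀ j ≤ n, dist (f^[j] y) (f^[j] z) ≤ max ε 0 := by
  classical
  obtain ⟨Q, hQY, hQ, hcard⟩ := Nat.sSup_mem (s := {k : ℕ | ∃ Q : Finset X, ↑Q ⊆ Y ∧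
    IsDynSep f n ε ↑Q ∧ Q.card = k}) ⟨0, ∅, by simp, by simp [IsDynSep], rfl⟩ hb
  refine ⟨Q, hQY, hcard, fun y hy => ?_⟩
  by_contra! hcon
  have hyQ : y ∉ Q := fun h => by
    obtain ⟨j, _, hj⟩ := hcon y h
    simp at hj
  have hle : Q.card + 1 ≤ sSup _ := le_csSup hb ⟨insert y Q, ?_, ?_, by
    rw [Finset.card_insert_of_notMem hyQ]⟩
  · rw [← hcard] at hle; omega
  · rw [Finset.coe_insert]; exact Set.insert_subset hy hQY
  · rw [Finset.coe_insert]
    unfold IsDynSep at hQ ⊢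
    have : Std.Symm (fun x y : X => ∃ j : ℕ, j ≤ n ∧ ε < dist (f^[j] x) (f^[j] y)) :=
      ⟨fun x y ⟨j, h, h'⟩ => ⟨j, h, by rwa [dist_comm]⟩⟩
    rw [Set.pairwise_insert_of_symm]
    refine ⟨hQ, fun z hz _ => ?_⟩
    obtain ⟨j, hj, h⟩ := hcon z hz
    exact ⟨j, hj, lt_of_le_of_lt (le_max_left _ _) h⟩

/-- Inner regularity: up to measure `θ`, the space is covered by subsets of the partition elements
which are pairwise more than `2 ε` apart. -/
theorem exists_compact_cores {X : Type*} [MetricSpace X] [CompactSpace X] [MeasurableSpace X]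
    [BorelSpace X] (μ : Measure X) [IsProbabilityMeasure μ] {P : Finset (Set X)}
    (hP : IsMeasPartition P) {θ : ℝ} (hθ : 0 < θ) :
    ∃ (K : {p // p ∈ P} → Set X) (ε : ℝ), 0 < ε ∧ (∀ p, K p ⊆ p.1) ∧ (∀ p, MeasurableSet (K p)) ∧
      (μ (⋃ p, K p)ᶜ).toReal ≤ θ ∧
      ∀ p q, ∀ x ∈ K p, ∀ y ∈ K q, dist x y ≤ 2 * ε → p = q := by
  classical
  have h1 : ∀ p : {p // p ∈ P}, ∃ K ⊆ p.1, IsCompact K ∧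
      μ (p.1 \ K) < ENNReal.ofReal (θ / (P.card + 1)) := fun p =>
    (hP.1 _ p.2).exists_isCompact_sdiff_lt (measure_ne_top _ _)
      (by simp only [ne_eq, ENNReal.ofReal_eq_zero, not_le]; positivity)
  choose K hK hKc hKμ using h1
  have h2 : ∀ p q : {p // p ∈ P}, ∃ r : ℝ, 0 < r ∧ (p ≠ q → ∀ x ∈ K p, ∀ y ∈ K q, r < dist x y) := by
    intro p q
    by_cases hpq : p = q
    · exact ⟨1, one_pos, fun h => absurd hpq h⟩
    · have hd : Disjoint (K p) (K q) :=
        (hP.2.2 p.2 q.2 (fun h => hpq (Subtype.ext h))).mono (hK p) (hK q)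
      obtain ⟨r, hr, h⟩ := Metric.exists_pos_forall_lt_edist (hKc p) (hKc q).isClosed hd
      refine ⟨r, by exact_mod_cast hr, fun _ x hx y hy => ?_⟩
      have := h x hx y hy
      rw [edist_nndist] at this
      rw [← coe_nndist]
      exact_mod_cast this
  choose r hr hrK using h2
  have h3 : ∃ ε : ℝ, 0 < ε ∧ ∀ p q, 2 * ε < r p q := by
    have : ∀ᶠ ε : ℝ in 𝓝[>] 0, ∀ p q, 2 * ε < r p q := by
      rw [eventually_all]; intro p
      rw [eventually_all]; intro q
      have : Tendsto (fun ε : ℝ => 2 * ε) (𝓝[>] 0) (𝓝 (2 * 0)) :=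
        ((continuous_const.mul continuous_id).tendsto 0).mono_left nhdsWithin_le_nhds
      exact this.eventually_lt_const (by simpa using hr p q)
    obtain ⟨ε, hε, h⟩ := (this.and self_mem_nhdsWithin).exists
    exact ⟨ε, h, hε⟩
  obtain ⟨ε, hε, hεr⟩ := h3
  refine ⟨K, ε, hε, hK, fun p => (hKc p).measurableSet, ?_, ?_⟩
  · have hsub : (⋃ p, K p)ᶜ ⊆ ⋃ p : {p // p ∈ P}, p.1 \ K p := by
      intro x hx
      have : x ∈ ⋃₀ (↑P : Set (Set X)) := by rw [hP.2.1]; trivial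
      obtain ⟨p, hp, hxp⟩ := this
      refine mem_iUnion.2 ⟨⟨p, hp⟩, hxp, fun h => hx (mem_iUnion.2 ⟨_, h⟩)⟩
    refine ENNReal.toReal_le_of_le_ofReal hθ.le ?_
    calc μ (⋃ p, K p)ᶜ ≤ μ (⋃ p : {p // p ∈ P}, p.1 \ K p) := measure_mono hsub
      _ ≤ ∑ p : {p // p ∈ P}, μ (p.1 \ K p) := measure_iUnion_fintype_le _ _
      _ ≤ ∑ _p : {p // p ∈ P}, ENNReal.ofReal (θ / (P.card + 1)) :=
          Finset.sum_le_sum fun p _ => (hKμ p).le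
      _ = ENNReal.ofReal (P.card * (θ / (P.card + 1))) := by
          rw [ENNReal.ofReal_mul (by positivity)]; simp
      _ ≤ _ := by
          apply ENNReal.ofReal_le_ofReal
          rw [mul_div_assoc', div_le_iff₀ (by positivity)]
          nlinarith
  · intro p q x hx y hy hd
    by_contra hpq
    have := hrK p q hpq x hx y hy
    linarith [hεr p q]

/-- Any partition has entropy at most the growth rate of separated sets, up to an error `η`
per time step. The itinerary distribution is compared, by Gibbs' inequality, with the one obtained
by choosing a point of a spanning set at random and misreading each of its letters with a small
probability; the misreading accounts for the orbit entries that are outside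
compact cores of the partition elements. -/
theorem refinedInfo_le {X : Type*} [MetricSpace X] [CompactSpace X] [MeasurableSpace X]
    [BorelSpace X] {f : X → X} (hf : Measurable f) (Y : Set X)
    (hb : ∀ n ε, 0 < ε →
      BddAbove {k : ℕ | ∃ Q : Finset X, ↑Q ⊆ Y ∧ IsDynSep f n ε ↑Q ∧ Q.card = k})
    (μ : Measure X) [IsProbabilityMeasure μ] (hμ : MeasurePreserving f μ μ) (hY : μ Yᶜ = 0)
    {P : Finset (Set X)} (hP : IsMeasPartition P) {η : ℝ} (hη : 0 < η) :
    ∃ ε : ℝ, 0 < ε ∧ ∀ n : ℕ, refinedInfo f μ P n ≤ Real.log (sepCount f Y n ε) + n * η := by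
  classical
  obtain ⟨name, hname⟩ := exists_name hP
  have hYne : Y.Nonempty := by
    by_contra h
    rw [not_nonempty_iff_eq_empty] at h
    simp [h] at hY
  obtain ⟨y0, hy0⟩ := hYne
  have hPpos : (0 : ℝ) < P.card := by exact_mod_cast Finset.card_pos.2 ⟨_, (name y0).2⟩
  -- `δ` is the misreading probability; a correct letter costs `-log (1 - δ) = η / 2`.
  set δ : ℝ := 1 - Real.exp (-(η / 2)) with hδdef
  have hδ : 0 < δ := by
    have : Real.exp (-(η / 2)) < 1 := by
      rw [← Real.exp_zero]; exact Real.exp_lt_exp.2 (by linarith)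
    linarith
  have hδ1 : δ < 1 := by linarith [Real.exp_pos (-(η / 2))]
  -- `L` is the cost of a misread letter.
  set L : ℝ := -Real.log (δ / P.card) with hLdef
  have hP1 : (1 : ℝ) ≤ P.card := by exact_mod_cast Finset.card_pos.2 ⟨_, (name y0).2⟩
  have hL : 0 ≤ L := by
    have : δ / P.card ≤ 1 := by rw [div_le_one hPpos]; linarith
    have := Real.log_nonpos (by positivity) this
    linarith
  -- With this measure outside the cores, misread letters cost at most `η / 2` on average.
  obtain ⟨K, ε, hε, hKp, hKm, hKμ, hKsep⟩ := exists_compact_cores μ hP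
    (θ := η / (2 * (L + 1))) (by positivity)
  refine ⟨ε, hε, fun n => ?_⟩
  obtain ⟨Q, hQY, hQcard, hspan⟩ := exists_spanning f Y n (hb n ε hε)
  rw [max_eq_left hε.le] at hspan
  obtain ⟨z0, hz0, _⟩ := hspan y0 hy0
  have hQpos : (0 : ℝ) < Q.card := by exact_mod_cast Finset.card_pos.2 ⟨_, hz0⟩
  -- At most one core comes within `ε` of `x`; `γ x` is the partition element it belongs to.
  have hγ : ∀ x : X, ∃ p : {p // p ∈ P}, ∀ p', ∀ y ∈ K p', dist y x ≤ ε → p' = p := by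
    intro x
    by_cases h : ∃ p, ∃ y ∈ K p, dist y x ≤ ε
    · obtain ⟨p, y, hy, hd⟩ := h
      refine ⟨p, fun p' y' hy' hd' => hKsep _ _ y' hy' y hy ?_⟩
      have := dist_triangle_right y' y x
      linarith
    · push Not at h
      exact ⟨name x, fun p' y hy hd => absurd hd (not_le.2 (h p' y hy))⟩
  choose γ hγ using hγ
  let k : {p // p ∈ P} → {p // p ∈ P} → ℝ := fun a b => if a = b then 1 - δ else δ / P.card
  have hk : ∀ a b, 0 < k a b := by
    intro a b
    simp only [k]
    split_ifs
    · linarith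
    · positivity
  have hksum : ∀ b, ∑ a, k a b ≤ 1 := by
    intro b
    have : ∀ a, k a b ≤ (if a = b then 1 - δ else 0) + δ / P.card := by
      intro a
      simp only [k]
      split_ifs
      · have : 0 ≤ δ / P.card := by positivity
        linarith
      · simp
    calc ∑ a, k a b ≤ ∑ a, ((if a = b then 1 - δ else 0) + δ / P.card) :=
          Finset.sum_le_sum fun a _ => this a
      _ = 1 := by
          rw [Finset.sum_add_distrib]
          simp
          field_simp
          ring
  -- The distribution of the misread `γ`-itinerary of a random point of the spanning set.
  let q : (Fin n → {p // p ∈ P}) → ℝ := fun a =>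
    ∑ z ∈ Q, (Q.card : ℝ)⁻¹ * ∏ j : Fin n, k (a j) (γ (f^[(j : ℕ)] z))
  have hqge : ∀ a, ∀ z ∈ Q, (Q.card : ℝ)⁻¹ * ∏ j : Fin n, k (a j) (γ (f^[(j : ℕ)] z)) ≤ q a := by
    intro a z hz
    exact Finset.single_le_sum (f := fun z => (Q.card : ℝ)⁻¹ *
      ∏ j : Fin n, k (a j) (γ (f^[(j : ℕ)] z))) (fun z _ => mul_nonneg (by positivity)
        (Finset.prod_nonneg fun j _ => (hk _ _).le)) hz
  have hqpos : ∀ a, 0 < q a := fun a => lt_of_lt_of_le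
    (mul_pos (inv_pos.2 hQpos) (Finset.prod_pos fun j _ => hk _ _)) (hqge a z0 hz0)
  have hqsum : ∑ a, q a ≤ 1 := by
    simp only [q]
    rw [Finset.sum_comm]
    calc ∑ z ∈ Q, ∑ a : Fin n → {p // p ∈ P},
          (Q.card : ℝ)⁻¹ * ∏ j : Fin n, k (a j) (γ (f^[(j : ℕ)] z))
        ≤ ∑ z ∈ Q, (Q.card : ℝ)⁻¹ := by
          refine Finset.sum_le_sum fun z _ => ?_
          rw [← Finset.mul_sum, ← Fintype.prod_sum
            (fun (j : Fin n) a => k a (γ (f^[(j : ℕ)] z)))]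
          refine mul_le_of_le_one_right (by positivity) ?_
          exact Finset.prod_le_one (fun j _ => Finset.sum_nonneg fun a _ => (hk _ _).le)
            fun j _ => hksum _
      _ = 1 := by simp [hQpos.ne']
  have hG := gibbs (fun a : Fin n → {p // p ∈ P} =>
    (μ (⋂ i : Fin n, f^[(i : ℕ)] ⁻¹' ((a i : Set X)))).toReal) q
    (fun _ => ENNReal.toReal_nonneg) (sum_cyl hP hf μ n) hqpos hqsum
  obtain ⟨hInt, hI⟩ := integral_itin hP hname hf μ n (fun a => -Real.log (q a))
  refine hG.trans ?_
  rw [hI]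
  set U : Set X := (⋃ p, K p)ᶜ with hU
  have hUm : MeasurableSet U := (MeasurableSet.iUnion hKm).compl
  have hUj : ∀ j : ℕ, MeasurableSet (f^[j] ⁻¹' U) := fun j => hf.iterate j hUm
  have hIntj : ∀ j : Fin n, Integrable ((f^[(j : ℕ)] ⁻¹' U).indicator fun _ => L) μ :=
    fun j => (integrable_const L).indicator (hUj _)
  have hpt : ∀ y ∈ Y, -Real.log (q (itin f name n y)) ≤ (Real.log Q.card + n * (η / 2)) +
      ∑ j : Fin n, (f^[(j : ℕ)] ⁻¹' U).indicator (fun _ => L) y := by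
    intro y hy
    obtain ⟨z, hz, hd⟩ := hspan y hy
    have hpr : 0 < ∏ j : Fin n, k (itin f name n y j) (γ (f^[(j : ℕ)] z)) :=
      Finset.prod_pos fun j _ => hk _ _
    have hQi : (0 : ℝ) < (Q.card : ℝ)⁻¹ := inv_pos.2 hQpos
    have h1 := Real.log_le_log (mul_pos hQi hpr) (hqge (itin f name n y) z hz)
    rw [Real.log_mul hQi.ne' hpr.ne', Real.log_inv,
      Real.log_prod fun j _ => (hk _ _).ne'] at h1
    have h2 : -∑ j : Fin n, Real.log (k (itin f name n y j) (γ (f^[(j : ℕ)] z))) ≤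
        ∑ j : Fin n, (η / 2 + (f^[(j : ℕ)] ⁻¹' U).indicator (fun _ => L) y) := by
      rw [← Finset.sum_neg_distrib]
      refine Finset.sum_le_sum fun j _ => ?_
      have hlog : -Real.log (1 - δ) = η / 2 := by
        rw [hδdef]; simp
      by_cases hyU : f^[(j : ℕ)] y ∈ U
      · rw [indicator_of_mem (by exact hyU)]
        simp only [k]
        split_ifs
        · linarith
        · linarith
      · rw [indicator_of_notMem (by exact hyU)]
        rw [hU, notMem_compl_iff, mem_iUnion] at hyU
        obtain ⟨p, hp⟩ := hyU
        have e1 : name (f^[(j : ℕ)] y) = p := (hname _ _).1 (hKp p hp)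
        have e2 := hγ (f^[(j : ℕ)] z) p _ hp (hd j j.2.le)
        have : itin f name n y j = γ (f^[(j : ℕ)] z) := by rw [← e2, ← e1]; rfl
        simp only [k, if_pos this]
        linarith
    rw [Finset.sum_add_distrib] at h2
    simp only [Finset.sum_const, Finset.card_univ, Fintype.card_fin, nsmul_eq_mul] at h2
    linarith
  calc ∫ x, -Real.log (q (itin f name n x)) ∂μ
      ≤ ∫ y, ((Real.log Q.card + n * (η / 2)) +
          ∑ j : Fin n, (f^[(j : ℕ)] ⁻¹' U).indicator (fun _ => L) y) ∂μ := by
        refine integral_mono_ae hInt ((integrable_const _).add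
          (integrable_finsetSum _ fun j _ => hIntj j)) ?_
        have : ∀ᵐ y ∂μ, y ∈ Y := by
          rw [ae_iff]; exact hY
        filter_upwards [this] with y hy using hpt y hy
    _ = (Real.log Q.card + n * (η / 2)) + ∑ j : Fin n, (μ U).toReal * L := by
        rw [integral_add (integrable_const _) (integrable_finsetSum _ fun j _ => hIntj j),
          integral_finsetSum _ fun j _ => hIntj j]
        congr 1
        · simp
        · refine Finset.sum_congr rfl fun j _ => ?_
          rw [integral_indicator_const _ (hUj _), Measure.real,
            (hμ.iterate j).measure_preimage hUm.nullMeasurableSet, smul_eq_mul]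
    _ ≤ _ := by
        rw [hQcard]
        simp only [Finset.sum_const, Finset.card_univ, Fintype.card_fin, nsmul_eq_mul]
        have h5 : (μ U).toReal * L ≤ η / 2 := by
          calc (μ U).toReal * L ≤ η / (2 * (L + 1)) * L := by gcongr
            _ ≤ η / 2 := by
              rw [div_mul_eq_mul_div, div_le_div_iff₀ (by positivity) (by positivity)]
              nlinarith
        have h6 : (n : ℝ) * ((μ U).toReal * L) ≤ n * (η / 2) := by gcongr
        linarith

/-- The easy half of the variational principle. -/
theorem measEntropy_le {X : Type*} [MetricSpace X] [CompactSpace X] [MeasurableSpace X]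
    [BorelSpace X] {f : X → X} (hf : Measurable f) (Y : Set X)
    (hb : ∀ n ε, 0 < ε →
      BddAbove {k : ℕ | ∃ Q : Finset X, ↑Q ⊆ Y ∧ IsDynSep f n ε ↑Q ∧ Q.card = k})
    (μ : Measure X) [IsProbabilityMeasure μ] (hμ : MeasurePreserving f μ μ) (hY : μ Yᶜ = 0) :
    measEntropy f μ ≤ topEntropyOn f Y := by
  refine iSup₂_le fun P hP => ?_
  by_contra hcon
  rw [not_le] at hcon
  obtain ⟨r, hr1, hr2⟩ := EReal.lt_iff_exists_real_btwn.1 hcon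
  obtain ⟨s, hs1, hs2⟩ := EReal.lt_iff_exists_real_btwn.1 hr2
  rw [EReal.coe_lt_coe_iff] at hs1 hs2
  obtain ⟨ε, hε, h⟩ := refinedInfo_le hf Y hb μ hμ hY hP (η := s - r) (by linarith)
  have hlim : Filter.atTop.limsup
      (fun n : ℕ => ((Real.log (sepCount f Y n ε) / n : ℝ) : EReal)) < r :=
    lt_of_le_of_lt (le_iSup₂ (f := fun (ε : ℝ) (_ : 0 < ε) => Filter.atTop.limsup
      (fun n : ℕ => ((Real.log (sepCount f Y n ε) / n : ℝ) : EReal))) ε hε) hr1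
  have hev := Filter.eventually_lt_of_limsup_lt hlim
  have : partEntropy f μ P ≤ s := by
    unfold partEntropy
    refine Filter.limsup_le_of_le ?_ ?_
    · refine Filter.IsCoboundedUnder.of_frequently_ge (a := 0) ?_
      exact Frequently.of_forall fun n => div_nonneg (refinedInfo_nonneg f μ n) (by positivity)
    · filter_upwards [hev, eventually_gt_atTop 0] with n hn hn0
      rw [EReal.coe_lt_coe_iff] at hn
      have hn0' : (0 : ℝ) < n := by exact_mod_cast hn0
      rw [div_lt_iff₀ hn0'] at hn
      rw [div_le_iff₀ hn0']
      linarith [h n]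
  linarith

/-! ### Symbolic codings -/

/-- `H` codes the compact invariant set `S` of `f` by the vertex shift of `Adj`: restricted
to `S` it is a continuous bijection onto that vertex shift which intertwines `f` with the shift. -/
structure Coding {X B : Type*} [TopologicalSpace X] [TopologicalSpace B] (f : X → X) (S : Set X)
    (Adj : B → B → Prop) (H : X → ℤ → B) : Prop where
  compact : IsCompact S
  image : f '' S = S
  shift : ∀ x ∈ S, ∀ i, H (f x) i = H x (i + 1)
  cont : ∀ i, ContinuousOn (fun x => H x i) S
  inj : InjOn H S
  mem : ∀ x ∈ S, H x ∈ vertexShift Adj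
  surj : ∀ z ∈ vertexShift Adj, ∃ x ∈ S, H x = z

section Coding

variable {X B : Type*} [MetricSpace X] [TopologicalSpace B] {f : X → X} {S : Set X}
  {Adj : B → B → Prop} {H : X → ℤ → B}

theorem Coding.maps (hC : Coding f S Adj H) : ∀ x ∈ S, f x ∈ S := fun x hx => by
  rw [← hC.image]; exact mem_image_of_mem f hx

theorem Coding.iter_mem (hC : Coding f S Adj H) {x : X} (hx : x ∈ S) (j : ℕ) : f^[j] x ∈ S := by
  induction j with
  | zero => exact hx
  | succ j ih => rw [Function.iterate_succ_apply']; exact hC.maps _ ih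

theorem Coding.iter (hC : Coding f S Adj H) {x : X} (hx : x ∈ S) (j : ℕ) (i : ℤ) :
    H (f^[j] x) i = H x (i + j) := by
  induction j generalizing i with
  | zero => simp
  | succ j ih =>
    rw [Function.iterate_succ_apply', hC.shift _ (hC.iter_mem hx j), ih]
    push_cast; congr 1; ring

/-- A continuous function on `S` is determined up to `ε` by a finite window of the code. -/
theorem Coding.window [T2Space B] (hC : Coding f S Adj H) {Z : Type*} [PseudoMetricSpace Z]
    {g : X → Z} (hg : ContinuousOn g S) {ε : ℝ} (hε : 0 < ε) :
    ∃ k : ℕ, ∀ x ∈ S, ∀ y ∈ S, (∀ i : ℤ, |i| ≤ k → H x i = H y i) → dist (g x) (g y) < ε := by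
  by_contra! hcon
  have : CompactSpace S := isCompact_iff_compactSpace.1 hC.compact
  -- Pairs violating the claim for the window `[-k, k]` form decreasing compact sets; a pair in all of
  -- them has one and the same code.
  let F : ℕ → Set (S × S) := fun k => {p | (∀ i : ℤ, |i| ≤ k → H p.1 i = H p.2 i) ∧
    ε ≤ dist (g p.1) (g p.2)}
  have hcont : ∀ i, Continuous fun x : S => H x i := fun i =>
    continuousOn_iff_continuous_domRestrict.1 (hC.cont i)
  have hgc : Continuous fun x : S => g x := continuousOn_iff_continuous_domRestrict.1 hg
  have hFc : ∀ k, IsClosed (F k) := by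
    intro k
    refine IsClosed.inter (s₁ := {p : S × S | ∀ i : ℤ, |i| ≤ k → H p.1 i = H p.2 i})
      (s₂ := {p : S × S | ε ≤ dist (g p.1) (g p.2)}) ?_ ?_
    · simp only [Set.ofPred_forall]
      refine isClosed_iInter fun i => isClosed_iInter fun _ => ?_
      exact isClosed_eq ((hcont i).comp continuous_fst) ((hcont i).comp continuous_snd)
    · exact isClosed_le continuous_const
        ((hgc.comp continuous_fst).dist (hgc.comp continuous_snd))
  obtain ⟨p, hp⟩ := IsCompact.nonempty_iInter_of_sequence_nonempty_isCompact_isClosed F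
    (fun k p hp => ⟨fun i hi => hp.1 i (hi.trans (by push_cast; omega)), hp.2⟩)
    (fun k => by
      obtain ⟨x, hx, y, hy, h, hd⟩ := hcon k
      exact ⟨(⟨x, hx⟩, ⟨y, hy⟩), h, hd⟩)
    (hFc 0).isCompact hFc
  rw [mem_iInter] at hp
  have heq : H p.1 = H p.2 := funext fun i => (hp i.natAbs).1 i (by simp)
  have := (hp 0).2
  rw [hC.inj p.1.2 p.2.2 heq, dist_self] at this
  linarith

/-- Bounds on the number of words occurring in the code of `D` bound the
topological entropy on `D`. -/
theorem Coding.entropy_le [T2Space B] (hC : Coding f S Adj H) {D : Set X} (hD : D ⊆ S) {c : ℝ}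
    (hc : 0 ≤ c)
    (h : ∀ η : ℝ, 0 < η → ∃ C : ℝ, 1 ≤ C ∧ ∀ n : ℕ, ∃ L : Set (ℕ → B), L.Finite ∧
      (L.ncard : ℝ) ≤ C * Real.exp ((c + η) * n) ∧
      ∀ x ∈ D, ∀ p : ℤ, ∃ w ∈ L, ∀ i : ℕ, i < n → H x (p + i) = w i) :
    topEntropyOn f D ≤ c ∧ ∀ n ε, 0 < ε →
      BddAbove {k : ℕ | ∃ Q : Finset X, ↑Q ⊆ D ∧ IsDynSep f n ε ↑Q ∧ Q.card = k} := by
  have key : ∀ ε : ℝ, 0 < ε → ∃ k : ℕ, ∀ n : ℕ, ∀ L : Set (ℕ → B), L.Finite →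
      (∀ x ∈ D, ∀ p : ℤ, ∃ w ∈ L, ∀ i : ℕ, i < n + 2 * k + 1 → H x (p + i) = w i) →
      ∀ Q : Finset X, ↑Q ⊆ D → IsDynSep f n ε ↑Q → Q.card ≤ L.ncard := by
    intro ε hε
    obtain ⟨k, hk⟩ := hC.window continuousOn_id hε
    refine ⟨k, fun n L hL hw Q hQ hsep => ?_⟩
    rcases Q.eq_empty_or_nonempty with rfl | ⟨x0, hx0⟩
    · simp
    have : Nonempty B := ⟨H x0 0⟩
    choose! w hwL hw using hw
    rw [← Set.ncard_coe_finset]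
    -- The code on `[-k, n + k]` determines a point of an `(n, ε)`-separated set.
    refine Set.ncard_le_ncard_of_injOn (fun x => w x (-(k : ℤ))) (fun x hx => hwL x (hQ hx) _) ?_ hL
    intro x hx y hy hxy
    by_contra hne
    obtain ⟨j, hj, hd⟩ := hsep hx hy hne
    have := hk (f^[j] x) (hC.iter_mem (hD (hQ hx)) j) (f^[j] y) (hC.iter_mem (hD (hQ hy)) j) ?_
    · simp only [id] at this; linarith
    · intro i hi
      rw [hC.iter (hD (hQ hx)), hC.iter (hD (hQ hy))]
      rw [abs_le] at hi
      obtain ⟨m, hm⟩ : ∃ m : ℕ, i + j = -k + m := ⟨(i + j + k).toNat, by omega⟩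
      rw [hm, hw x (hQ hx) (-(k : ℤ)) m (by omega), hw y (hQ hy) (-(k : ℤ)) m (by omega)]
      exact congrFun hxy m
  have hbdd : ∀ n ε, 0 < ε →
      BddAbove {k : ℕ | ∃ Q : Finset X, ↑Q ⊆ D ∧ IsDynSep f n ε ↑Q ∧ Q.card = k} := by
    intro n ε hε
    obtain ⟨k, hk⟩ := key ε hε
    obtain ⟨C, hC1, hL⟩ := h 1 one_pos
    obtain ⟨L, hLf, _, hL⟩ := hL (n + 2 * k + 1)
    refine ⟨L.ncard, ?_⟩
    rintro _ ⟨Q, hQ, hs, rfl⟩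
    exact hk n L hLf hL Q hQ hs
  refine ⟨iSup₂_le fun ε hε => ?_, hbdd⟩
  by_contra hcon
  rw [not_le] at hcon
  obtain ⟨r, hr1, hr2⟩ := EReal.lt_iff_exists_real_btwn.1 hcon
  rw [EReal.coe_lt_coe_iff] at hr1
  obtain ⟨k, hk⟩ := key ε hε
  set η := (r - c) / 2 with hη
  have hη0 : 0 < η := by rw [hη]; linarith
  obtain ⟨C, hC1, hL⟩ := h η hη0
  have hbound : ∀ n : ℕ, Real.log (sepCount f D n ε) ≤
      Real.log C + (c + η) * (n + 2 * k + 1) := by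
    intro n
    obtain ⟨L, hLf, hLc, hL⟩ := hL (n + 2 * k + 1)
    have hle : sepCount f D n ε ≤ L.ncard := by
      refine csSup_le ⟨0, ∅, by simp, by simp [IsDynSep], rfl⟩ ?_
      rintro _ ⟨Q, hQ, hs, rfl⟩
      exact hk n L hLf hL Q hQ hs
    have hlogC := Real.log_nonneg hC1
    rcases Nat.eq_zero_or_pos (sepCount f D n ε) with h0 | h0
    · rw [h0]; simp only [Nat.cast_zero, Real.log_zero]; positivity
    · calc Real.log (sepCount f D n ε)
          ≤ Real.log (C * Real.exp ((c + η) * ((n + 2 * k + 1 : ℕ) : ℝ))) := by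
            refine Real.log_le_log (by exact_mod_cast h0) (le_trans ?_ hLc)
            exact_mod_cast hle
        _ = _ := by
            rw [Real.log_mul (by positivity) (Real.exp_pos _).ne', Real.log_exp]
            push_cast; ring
  have hev : ∀ᶠ n : ℕ in atTop, ((Real.log (sepCount f D n ε) / n : ℝ) : EReal) ≤ r := by
    have ht : Tendsto (fun n : ℕ => (η : ℝ) * n) atTop atTop :=
      tendsto_natCast_atTop_atTop.const_mul_atTop hη0
    filter_upwards [ht.eventually_ge_atTop (Real.log C + (c + η) * (2 * k + 1)),
      eventually_gt_atTop 0] with n hn hn0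
    rw [EReal.coe_le_coe_iff, div_le_iff₀ (by exact_mod_cast hn0)]
    have := hbound n
    have : r = c + 2 * η := by rw [hη]; ring
    rw [this]
    nlinarith
  have := Filter.limsup_le_of_le (h := hev) (by isBoundedDefault)
  exact absurd hr2 (not_lt.2 this)

end Coding

/-! ### Loops in the transition graph -/

section Loops

variable {B : Type*}

/-- The paths with `n` vertices, all of them in `V`. -/
def pathSet (Adj : B → B → Prop) (V : Finset B) (n : ℕ) : Set (List B) :=
  {l | l.length = n ∧ (∀ x ∈ l, x ∈ V) ∧ l.IsChain Adj}

/-- The closed paths of `t` steps based at `i`, encoded by the list of the `t` vertices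
visited after the start. -/
def loopSet (Adj : B → B → Prop) (i : B) (t : ℕ) : Set (List B) :=
  {l | l.length = t ∧ (i :: l).IsChain Adj ∧ (i :: l).getLast (List.cons_ne_nil _ _) = i}

theorem pathSet_finite [Finite B] (Adj : B → B → Prop) (V : Finset B) (n : ℕ) :
    (pathSet Adj V n).Finite :=
  (List.finite_length_eq B n).subset fun _ h => h.1

theorem loopSet_finite [Finite B] (Adj : B → B → Prop) (i : B) (n : ℕ) :
    (loopSet Adj i n).Finite :=
  (List.finite_length_eq B n).subset fun _ h => h.1

/-- A path is cut at the first visit to its final vertex. -/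
theorem pathSet_subset [DecidableEq B] (Adj : B → B → Prop) (V : Finset B) (n : ℕ) :
    pathSet Adj V (n + 1) ⊆ ⋃ r ∈ V ×ˢ Finset.range (n + 1),
      (fun u : List B × List B => u.1 ++ r.1 :: u.2) ''
        (pathSet Adj (V.erase r.1) r.2 ×ˢ loopSet Adj r.1 (n - r.2)) := by
  rintro l ⟨hlen, hV, hch⟩
  have hne : l ≠ [] := by rintro rfl; simp at hlen
  obtain ⟨pre, post, hl, hpre⟩ := List.eq_append_cons_of_mem (List.getLast_mem hne)
  set i := l.getLast hne with hi
  have hlast : (i :: post).getLast (List.cons_ne_nil _ _) = i := by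
    conv_rhs => rw [hi]
    have h1 : l.getLast hne = (pre ++ i :: post).getLast (by simp) := by congr 1
    rw [h1, List.getLast_append_of_ne_nil _ (List.cons_ne_nil _ _)]
  rw [hl] at hlen hch hV
  simp only [List.length_append, List.length_cons] at hlen
  simp only [mem_iUnion]
  refine ⟨(i, pre.length), ?_, (pre, post), ⟨⟨rfl, ?_, (List.isChain_append.1 hch).1⟩,
    by simp only; omega, hch.right_of_append, hlast⟩, hl.symm⟩
  · simp only [Finset.mem_product, Finset.mem_range]
    exact ⟨hV i (by simp), by omega⟩
  · intro x hx
    refine Finset.mem_erase.2 ⟨?_, hV x (by simp [hx])⟩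
    rintro rfl
    exact hpre hx

/-- If the number of loops of length `t` is at most `α ^ t` at every vertex, then paths grow at rate `α`
up to a polynomial factor. The induction is on the number of allowed vertices: cutting a path at the
first visit to its final vertex leaves a path avoiding that vertex, followed by a loop. -/
theorem ncard_pathSet_le [Fintype B] (Adj : B → B → Prop) {α : ℝ} (hα : 1 ≤ α)
    (hl : ∀ i t, ((loopSet Adj i t).ncard : ℝ) ≤ α ^ t) (v : ℕ) :
    ∀ (V : Finset B), V.card = v → ∀ n, ((pathSet Adj V n).ncard : ℝ) ≤
      (Fintype.card B * (n + 1)) ^ v * α ^ n := by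
  classical
  induction v with
  | zero =>
    intro V hV n
    rw [Finset.card_eq_zero] at hV
    subst hV
    have h1 : (pathSet Adj ∅ n).ncard ≤ ({[]} : Set (List B)).ncard := by
      refine Set.ncard_le_ncard ?_ (finite_singleton _)
      rintro l ⟨_, h, _⟩
      exact List.eq_nil_iff_forall_not_mem.2 fun x hx => by simpa using h x hx
    rw [Set.ncard_singleton] at h1
    calc ((pathSet Adj ∅ n).ncard : ℝ) ≤ 1 := by exact_mod_cast h1
      _ ≤ _ := by rw [pow_zero, one_mul]; exact one_le_pow₀ hα
  | succ v ih =>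
    intro V hV n
    obtain ⟨i0, hi0⟩ : V.Nonempty := by rw [← Finset.card_pos]; omega
    have hB : (1 : ℝ) ≤ Fintype.card B := by
      exact_mod_cast Fintype.card_pos_iff.2 ⟨i0⟩
    cases n with
    | zero =>
      have h1 : (pathSet Adj V 0).ncard ≤ ({[]} : Set (List B)).ncard := by
        refine Set.ncard_le_ncard ?_ (finite_singleton _)
        rintro l ⟨h, _, _⟩
        exact List.length_eq_zero_iff.1 h
      rw [Set.ncard_singleton] at h1
      calc ((pathSet Adj V 0).ncard : ℝ) ≤ 1 := by exact_mod_cast h1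
        _ ≤ _ := by simpa using one_le_pow₀ hB
    | succ n =>
      have h1 : (pathSet Adj V (n + 1)).ncard ≤ ∑ r ∈ V ×ˢ Finset.range (n + 1),
          (pathSet Adj (V.erase r.1) r.2).ncard * (loopSet Adj r.1 (n - r.2)).ncard := by
        refine (Set.ncard_le_ncard (pathSet_subset Adj V n) ?_).trans
          ((Finset.set_ncard_biUnion_le _ _).trans (Finset.sum_le_sum fun r _ => ?_))
        · exact Set.Finite.biUnion (Finset.finite_toSet _) fun r _ =>
            ((pathSet_finite _ _ _).prod (loopSet_finite _ _ _)).image _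
        · rw [← Set.ncard_prod]
          exact Set.ncard_image_le ((pathSet_finite _ _ _).prod (loopSet_finite _ _ _))
      calc ((pathSet Adj V (n + 1)).ncard : ℝ)
          ≤ ∑ r ∈ V ×ˢ Finset.range (n + 1),
            ((pathSet Adj (V.erase r.1) r.2).ncard : ℝ) *
              ((loopSet Adj r.1 (n - r.2)).ncard : ℝ) := by exact_mod_cast h1
        _ ≤ ∑ r ∈ V ×ˢ Finset.range (n + 1),
            ((Fintype.card B : ℝ) * ((n + 1 : ℕ) + 1)) ^ v * α ^ (n + 1) := by
            refine Finset.sum_le_sum fun r hr => ?_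
            simp only [Finset.mem_product, Finset.mem_range] at hr
            have hr2 : (r.2 : ℝ) ≤ (n + 1 : ℕ) := by exact_mod_cast hr.2.le
            calc _ ≤ ((Fintype.card B * (r.2 + 1)) ^ v * α ^ r.2) * α ^ (n - r.2) := by
                  gcongr
                  · exact ih _ (by rw [Finset.card_erase_of_mem hr.1, hV]; rfl) _
                  · exact hl _ _
              _ = (Fintype.card B * (r.2 + 1)) ^ v * α ^ n := by
                  rw [mul_assoc, ← pow_add]; congr 2; omega
              _ ≤ _ := by
                  gcongr
                  omega
        _ ≤ _ := by
            rw [Finset.sum_const, Finset.card_product, Finset.card_range, nsmul_eq_mul,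
              pow_succ' _ v, ← mul_assoc]
            gcongr
            push_cast
            have : (V.card : ℝ) ≤ Fintype.card B := by exact_mod_cast Finset.card_le_univ V
            gcongr
            linarith

theorem poly_le_exp (K : ℝ) (hK : 0 ≤ K) (v : ℕ) {η : ℝ} (hη : 0 < η) :
    ∃ C : ℝ, 1 ≤ C ∧ ∀ n : ℕ, (K * (n + 1)) ^ v ≤ C * Real.exp (η * n) := by
  refine ⟨max 1 ((K / η) ^ v * v.factorial * Real.exp η), le_max_left _ _, fun n => ?_⟩
  have h := Real.pow_div_factorial_le_exp (η * (n + 1)) (by positivity) v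
  rw [div_le_iff₀ (by positivity)] at h
  calc (K * (n + 1)) ^ v = (K / η) ^ v * (η * (n + 1)) ^ v := by
        rw [← mul_pow]; congr 1; field_simp
    _ ≤ (K / η) ^ v * (Real.exp (η * (n + 1)) * v.factorial) := by gcongr
    _ = ((K / η) ^ v * v.factorial * Real.exp η) * Real.exp (η * n) := by
        rw [mul_add, mul_one, Real.exp_add]; ring
    _ ≤ _ := by gcongr; exact le_max_right _ _

/-- Entropy larger than `c` forces a vertex with more than `exp (c m)` loops of some length `m`. -/
theorem Coding.exists_loops {X : Type*} [MetricSpace X] [TopologicalSpace B] [T2Space B]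
    [Fintype B] {f : X → X} {S : Set X} {Adj : B → B → Prop} {H : X → ℤ → B}
    (hC : Coding f S Adj H) {c : ℝ} (hc : 0 ≤ c) (hent : (c : EReal) < topEntropyOn f S) :
    ∃ b, ∃ m : ℕ, 1 ≤ m ∧ Real.exp (c * m) < (loopSet Adj b m).ncard := by
  by_contra! hcon
  refine absurd hent (not_lt.2 (hC.entropy_le subset_rfl hc ?_).1)
  intro η hη
  have hpow : ∀ t : ℕ, Real.exp c ^ t = Real.exp (c * t) := fun t => by
    rw [← Real.exp_nat_mul, mul_comm]
  have hl : ∀ i t, ((loopSet Adj i t).ncard : ℝ) ≤ Real.exp c ^ t := by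
    intro i t
    rw [hpow]
    rcases Nat.eq_zero_or_pos t with rfl | ht
    · have h1 : (loopSet Adj i 0).ncard ≤ ({[]} : Set (List B)).ncard := by
        refine Set.ncard_le_ncard ?_ (finite_singleton _)
        rintro l ⟨h, _, _⟩
        exact List.length_eq_zero_iff.1 h
      rw [Set.ncard_singleton] at h1
      simpa using h1
    · exact hcon i t ht
  obtain ⟨C, hC1, hCb⟩ := poly_le_exp (Fintype.card B) (by positivity) (Fintype.card B) hη
  refine ⟨C, hC1, fun n => ?_⟩
  rcases isEmpty_or_nonempty B with hB | ⟨⟨b0⟩⟩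
  · exact ⟨∅, finite_empty, by simp; positivity, fun x => (hB.false (H x 0)).elim⟩
  refine ⟨(fun l : List B => fun i => l.getD i b0) '' pathSet Adj Finset.univ n,
    (pathSet_finite _ _ _).image _, ?_, ?_⟩
  · calc _ ≤ ((pathSet Adj Finset.univ n).ncard : ℝ) := by
          exact_mod_cast Set.ncard_image_le (pathSet_finite _ _ _)
      _ ≤ (Fintype.card B * (n + 1)) ^ Fintype.card B * Real.exp c ^ n :=
          ncard_pathSet_le Adj (Real.one_le_exp hc) hl _ _ Finset.card_univ n
      _ ≤ C * Real.exp (η * n) * Real.exp (c * n) := by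
          rw [hpow]; gcongr; exact hCb n
      _ = _ := by rw [mul_assoc, ← Real.exp_add]; congr 2; ring
  · intro x hx p
    refine ⟨_, ⟨List.ofFn (fun i : Fin n => H x (p + (i : ℕ))), ⟨by simp, by simp, ?_⟩, rfl⟩, ?_⟩
    · rw [List.isChain_ofFn]
      intro i hi
      have := hC.mem x hx (p + i)
      simpa [add_assoc] using this
    · intro i hi
      simp [hi]

end Loops

/-! ### The hierarchy of words -/

/-- A stock of words of common length `len`, more than `exp (c len)` in number. A word is a
function on `ℕ` of which only the values below `len` matter. -/
structure Level (B : Type*) (c : ℝ) where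
  len : ℕ
  words : Finset (ℕ → B)
  len_pos : 1 ≤ len
  inj : ∀ u ∈ words, ∀ v ∈ words, (∀ i < len, u i = v i) → u = v
  big : Real.exp (c * len) < words.card

/-- The bi-infinite sequence `z` is a concatenation of words of the level `L`. -/
def Parsed {B : Type*} {c : ℝ} (L : Level B c) (z : ℤ → B) : Prop :=
  ∃ p : ℤ, ∀ j : ℤ, ∃ w ∈ L.words, ∀ i : ℕ, i < L.len → z (p + j * L.len + i) = w i

/-- `L'` refines `L`: its words concatenate `M ≥ 2` words of `L`, each word of `L` being used
equally often in all of them (expressed by the sums over all test functions `φ`), and their number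
is as small as the definition of a level permits. -/
def Refines {B : Type*} {c : ℝ} (L L' : Level B c) : Prop :=
  ∃ M : ℕ, 2 ≤ M ∧ L'.len = M * L.len ∧ (L'.words.card : ℝ) ≤ Real.exp (c * L'.len) + 1 ∧
    ∃ C : ((ℕ → B) → ℝ) → ℝ, ∀ w' ∈ L'.words, ∃ s : ℕ → ℕ → B,
      (∀ j < M, s j ∈ L.words ∧ ∀ i < L.len, w' (j * L.len + i) = s j i) ∧
      ∀ φ, ∑ j ∈ Finset.range M, φ (s j) = C φ

section Levels

variable {B : Type*} {c : ℝ}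

/-- Loops at one vertex can be concatenated freely, so they serve as the words of a first level. -/
theorem exists_level_zero [Finite B] {Adj : B → B → Prop} {b : B} {m : ℕ} (hm : 1 ≤ m)
    (h : Real.exp (c * m) < (loopSet Adj b m).ncard) :
    ∃ L : Level B c, ∀ z, Parsed L z → z ∈ vertexShift Adj := by
  classical
  set e : List B → ℕ → B := fun l i => l.getD i b with he
  have hinj : ∀ u ∈ loopSet Adj b m, ∀ v ∈ loopSet Adj b m, (∀ i < m, e u i = e v i) → u = v := by
    intro u hu v hv huv
    refine List.ext_getElem (hu.1.trans hv.1.symm) fun i h1 h2 => ?_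
    have := huv i (hu.1 ▸ h1)
    simpa [he, h1, h2] using this
  have hfin := (loopSet_finite Adj b m)
  refine ⟨⟨m, hfin.toFinset.image e, hm, ?_, ?_⟩, ?_⟩
  · intro u hu v hv huv
    simp only [Finset.mem_image, Set.Finite.mem_toFinset] at hu hv
    obtain ⟨u, hu, rfl⟩ := hu
    obtain ⟨v, hv, rfl⟩ := hv
    rw [hinj u hu v hv huv]
  · rw [Finset.card_image_of_injOn]
    · rwa [← Set.ncard_eq_toFinset_card _ hfin]
    · intro u hu v hv huv
      exact hinj u (by simpa using hu) v (by simpa using hv) fun i _ => congrFun huv i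
  · rintro z ⟨p, hp⟩ t
    simp only [Finset.mem_image, Set.Finite.mem_toFinset] at hp
    have hm' : (0 : ℤ) < m := by exact_mod_cast hm
    set j := (t - p) / m with hj
    have h0 := Int.emod_nonneg (t - p) hm'.ne'
    have h1 := Int.emod_lt_of_pos (t - p) hm'
    have h2 := Int.mul_ediv_add_emod (t - p) m
    obtain ⟨r, hr⟩ : ∃ r : ℕ, (t - p) % m = r := ⟨_, (Int.toNat_of_nonneg h0).symm⟩
    rw [hr] at h1 h2
    have ht : t = p + j * m + r := by rw [hj]; linarith
    have hrm : r < m := by exact_mod_cast h1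
    obtain ⟨_, ⟨u, hu, rfl⟩, hz⟩ := hp j
    have hur : r < u.length := hu.1 ▸ hrm
    have hzt : z t = u[r] := by rw [ht, hz r hrm]; simp [he, hur]
    have hch := List.isChain_iff_getElem.1 hu.2.1
    by_cases hlast : r + 1 < m
    · have hur' : r + 1 < u.length := hu.1 ▸ hlast
      have hzt' : z (t + 1) = u[r + 1] := by
        have : t + 1 = p + j * m + ((r + 1 : ℕ) : ℤ) := by rw [ht]; push_cast; ring
        rw [this, hz (r + 1) hlast]; simp [he, hur']
      rw [hzt, hzt']
      exact hch (r + 1) (by simpa using hur')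
    · have hrm' : r + 1 = m := by omega
      obtain ⟨_, ⟨v, hv, rfl⟩, hz'⟩ := hp (j + 1)
      have hv0 : 0 < v.length := by rw [hv.1]; omega
      have hzt' : z (t + 1) = v[0] := by
        have : t + 1 = p + (j + 1) * m + ((0 : ℕ) : ℤ) := by
          rw [ht, ← hrm']; push_cast; ring
        rw [this, hz' 0 hm]; simp [he, hv0]
      have hlastb : u[r] = b := by
        have := hu.2.2
        rw [List.getLast_eq_getElem] at this
        have hul : u.length = r + 1 := by rw [hu.1, hrm']
        simpa [hul] using this
      rw [hzt, hzt', hlastb]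
      simpa using List.isChain_iff_getElem.1 hv.2.1 0 (by simpa using hv0)

/-- `N ^ M` eventually exceeds `β ^ M` by more than the polynomial factor `(M + 1) ^ N`. -/
theorem exists_block_number {β : ℝ} (hβ : 1 ≤ β) {N : ℕ} (hN : β < N) :
    ∃ M : ℕ, 2 ≤ M ∧ ((M : ℝ) + 1) ^ N * β ^ M < (N : ℝ) ^ M := by
  have hN0 : (0 : ℝ) < N := by linarith
  have hr : |β / N| < 1 := by
    rw [abs_of_nonneg (by positivity), div_lt_one hN0]; exact hN
  have ht := tendsto_pow_const_mul_const_pow_of_abs_lt_one N hr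
  have hev := ht.eventually_lt_const (show (0 : ℝ) < (2 ^ N)⁻¹ by positivity)
  obtain ⟨M, hM, hM2⟩ := (hev.and (eventually_ge_atTop 2)).exists
  refine ⟨M, hM2, ?_⟩
  have hM1 : (1 : ℝ) ≤ M := by exact_mod_cast (by omega : 1 ≤ M)
  rw [div_pow, ← mul_div_assoc, div_lt_iff₀ (by positivity), inv_mul_eq_div,
    lt_div_iff₀ (by positivity)] at hM
  calc ((M : ℝ) + 1) ^ N * β ^ M ≤ (M * 2) ^ N * β ^ M := by gcongr; linarith
    _ = M ^ N * β ^ M * 2 ^ N := by rw [mul_pow]; ring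
    _ < _ := hM

/-- Among the `N ^ M` sequences of `M` words of `L` (with `N` the number of words) there are at most
`(M + 1) ^ N` multiplicity vectors. For large `M` the pigeonhole principle gives more than
`exp (c M len)` sequences with a common multiplicity vector; just enough of them are kept. -/
theorem exists_refinement (hc : 0 ≤ c) (L : Level B c) : ∃ L' : Level B c, Refines L L' := by
  classical
  obtain ⟨M, hM2, hM⟩ := exists_block_number (β := Real.exp (c * L.len))
    (Real.one_le_exp (by positivity)) L.big
  have hM0 : 0 < M := by omega
  have hl0 : 0 < L.len := L.len_pos
  set n := ⌊Real.exp (c * (M * L.len : ℕ))⌋₊ with hn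
  -- The multiplicity vector of a sequence of `M` words.
  let cnt : (Fin M → {w // w ∈ L.words}) → {w // w ∈ L.words} → Fin (M + 1) := fun s w =>
    ⟨(Finset.univ.filter fun j => s j = w).card,
      Nat.lt_succ_of_le ((Finset.card_le_univ _).trans (by simp))⟩
  have hpig : Fintype.card ({w // w ∈ L.words} → Fin (M + 1)) * n <
      Fintype.card (Fin M → {w // w ∈ L.words}) := by
    simp only [Fintype.card_fun, Fintype.card_fin, Fintype.card_coe]
    have h1 : (n : ℝ) ≤ Real.exp (c * L.len) ^ M := by
      rw [← Real.exp_nat_mul]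
      refine (Nat.floor_le (Real.exp_pos _).le).trans (le_of_eq ?_)
      congr 1; push_cast; ring
    have h2 : ((M : ℝ) + 1) ^ L.words.card * n < (L.words.card : ℝ) ^ M :=
      lt_of_le_of_lt (by gcongr) hM
    exact_mod_cast h2
  obtain ⟨y, hy⟩ := Fintype.exists_lt_card_fiber_of_mul_lt_card cnt hpig
  obtain ⟨T, hT, hTc⟩ := Finset.exists_subset_card_eq (Nat.succ_le_of_lt hy)
  -- The concatenation of the words; `% M` only makes it total.
  let cat : (Fin M → {w // w ∈ L.words}) → ℕ → B := fun s t =>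
    (s ⟨t / L.len % M, Nat.mod_lt _ hM0⟩).1 (t % L.len)
  have hcat : ∀ s (j : Fin M), ∀ i < L.len, cat s (j * L.len + i) = (s j).1 i := by
    intro s j i hi
    have e1 : (j * L.len + i) / L.len = j := by
      rw [mul_comm, Nat.mul_add_div hl0, Nat.div_eq_of_lt hi, add_zero]
    have e2 : (j * L.len + i) % L.len = i := by
      rw [mul_comm, Nat.mul_add_mod, Nat.mod_eq_of_lt hi]
    simp only [cat, e1, e2, Nat.mod_eq_of_lt j.2]
  have hcatinj : ∀ s t, (∀ i < M * L.len, cat s i = cat t i) → s = t := by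
    intro s t hst
    funext j
    apply Subtype.ext
    refine L.inj _ (s j).2 _ (t j).2 fun i hi => ?_
    rw [← hcat s j i hi, ← hcat t j i hi]
    refine hst _ ?_
    calc j * L.len + i < (j + 1) * L.len := by rw [add_mul, one_mul]; omega
      _ ≤ _ := Nat.mul_le_mul_right _ j.2
  have hcard : (T.image cat).card = n + 1 := by
    rw [Finset.card_image_of_injective _ fun s t h => hcatinj s t fun i _ => congrFun h i, hTc]
  refine ⟨⟨M * L.len, T.image cat, Nat.mul_pos hM0 hl0, ?_, ?_⟩, M, hM2, rfl, ?_, ?_⟩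
  · intro u hu v hv huv
    obtain ⟨s, _, rfl⟩ := Finset.mem_image.1 hu
    obtain ⟨t, _, rfl⟩ := Finset.mem_image.1 hv
    rw [hcatinj s t huv]
  · rw [hcard]; push_cast; exact_mod_cast Nat.lt_floor_add_one _
  · simp only [hcard]; push_cast
    have := Nat.floor_le (Real.exp_pos (c * (M * L.len : ℕ))).le
    push_cast at this
    rw [hn]
    push_cast
    linarith
  · refine ⟨fun φ => ∑ w : {w // w ∈ L.words}, ((y w : ℕ) : ℝ) * φ w.1, fun w' hw' => ?_⟩
    obtain ⟨s, hs, rfl⟩ := Finset.mem_image.1 hw'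
    have hsy : cnt s = y := by simpa using hT hs
    refine ⟨fun j => (s ⟨j % M, Nat.mod_lt _ hM0⟩).1, fun j hj => ⟨Subtype.prop _, fun i hi => ?_⟩,
      fun φ => ?_⟩
    · have := hcat s ⟨j, hj⟩ i hi
      simpa [Nat.mod_eq_of_lt hj] using this
    · rw [Finset.sum_range]
      simp only [Nat.mod_eq_of_lt (Fin.is_lt _), Fin.eta]
      rw [← Finset.sum_fiberwise Finset.univ s, ← hsy]
      refine Finset.sum_congr rfl fun w _ => ?_
      rw [Finset.sum_congr rfl (g := fun _ => φ w.1) fun j hj => by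
        rw [(Finset.mem_filter.1 hj).2]]
      simp [cnt]

theorem exists_hierarchy (hc : 0 ≤ c) (L0 : Level B c) :
    ∃ Lv : ℕ → Level B c, Lv 0 = L0 ∧ ∀ k, Refines (Lv k) (Lv (k + 1)) := by
  choose nxt hnxt using exists_refinement (B := B) hc
  refine ⟨fun k => nxt^[k] L0, rfl, fun k => ?_⟩
  simp only [Function.iterate_succ_apply']
  exact hnxt _

/-- A concatenation of words of a refinement is a concatenation of words of the coarser level. -/
theorem Refines.parsed {L L' : Level B c} (h : Refines L L') {z : ℤ → B} (hz : Parsed L' z) :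
    Parsed L z := by
  obtain ⟨M, hM, hlen, _, C, hs⟩ := h
  obtain ⟨p, hp⟩ := hz
  refine ⟨p, fun j => ?_⟩
  have hM' : (0 : ℤ) < M := by exact_mod_cast (by omega : 0 < M)
  obtain ⟨w', hw', hz⟩ := hp (j / M)
  obtain ⟨s, hs, _⟩ := hs w' hw'
  obtain ⟨r, hr⟩ : ∃ r : ℕ, j % M = r :=
    ⟨_, (Int.toNat_of_nonneg (Int.emod_nonneg j hM'.ne')).symm⟩
  have h1 := Int.emod_lt_of_pos j hM'
  have h2 := Int.mul_ediv_add_emod j M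
  rw [hr] at h1 h2
  have hrM : r < M := by exact_mod_cast h1
  refine ⟨s r, (hs r hrM).1, fun i hi => ?_⟩
  rw [← (hs r hrM).2 i hi, ← hz (r * L.len + i)]
  · congr 1
    rw [hlen]
    push_cast
    have h3 : j * (L.len : ℤ) = (M * (j / M) + r) * L.len := by rw [h2]
    rw [h3]
    ring
  · rw [hlen]
    calc r * L.len + i < (r + 1) * L.len := by rw [add_mul, one_mul]; omega
      _ ≤ _ := Nat.mul_le_mul_right _ hrM

/-- The lengths tend to infinity, since they at least double from each level to the next. -/
theorem len_tendsto {Lv : ℕ → Level B c} (h : ∀ k, Refines (Lv k) (Lv (k + 1))) (k : ℕ) :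
    k ≤ (Lv k).len := by
  induction k with
  | zero => exact Nat.zero_le _
  | succ k ih =>
    obtain ⟨M, hM, hlen, _⟩ := h k
    have := (Lv k).len_pos
    rw [hlen]
    nlinarith

end Levels

/-! ### The subsystems of concatenations -/

/-- The points of `S` whose code is a concatenation of words of `L`. -/
def parsedSet {X B : Type*} {c : ℝ} (S : Set X) (H : X → ℤ → B) (L : Level B c) : Set X :=
  {x | x ∈ S ∧ Parsed L (H x)}

/-- The points of `S` whose code is a concatenation of words of every level. -/
def limitSet {X B : Type*} {c : ℝ} (S : Set X) (H : X → ℤ → B) (Lv : ℕ → Level B c) : Set X :=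
  ⋂ k, parsedSet S H (Lv k)

/-- Division with remainder of an integer by a level length. -/
theorem exists_div_mod (t : ℤ) {l : ℕ} (hl : 1 ≤ l) : ∃ (j : ℤ) (r : ℕ), r < l ∧ t = j * l + r := by
  have hl' : (0 : ℤ) < l := by exact_mod_cast hl
  refine ⟨t / l, (t % l).toNat, ?_, ?_⟩
  · have := Int.emod_lt_of_pos t hl'
    have := Int.emod_nonneg t hl'.ne'
    omega
  · rw [Int.toNat_of_nonneg (Int.emod_nonneg t hl'.ne'), mul_comm]
    exact (Int.mul_ediv_add_emod t l).symm

theorem div_mod_unique (j : ℤ) {l r : ℕ} (hr : r < l) :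
    (j * l + r) / l = j ∧ ((j * l + r) % l).toNat = r := by
  have hl' : (0 : ℤ) < l := by exact_mod_cast (by omega : 0 < l)
  have hr' : (r : ℤ) < l := by exact_mod_cast hr
  constructor
  · rw [add_comm, Int.add_mul_ediv_right _ _ hl'.ne', Int.ediv_eq_zero_of_lt (by positivity) hr']
    ring
  · rw [add_comm, Int.add_mul_emod_self_right, Int.emod_eq_of_lt (by positivity) hr']
    simp

section Parsed

variable {X B : Type*} [MetricSpace X] [TopologicalSpace B] {f : X → X} {S : Set X}
  {Adj : B → B → Prop} {H : X → ℤ → B} {c : ℝ}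

/-- The phase of a parsing may be taken in `[0, len)`. -/
theorem parsed_iff_lt (L : Level B c) (z : ℤ → B) :
    Parsed L z ↔ ∃ r : Fin L.len, ∀ j : ℤ, ∃ w ∈ L.words, ∀ i : ℕ, i < L.len →
      z ((r : ℕ) + j * L.len + i) = w i := by
  constructor
  · rintro ⟨p, hp⟩
    obtain ⟨j0, r, hr, hpr⟩ := exists_div_mod p L.len_pos
    refine ⟨⟨r, hr⟩, fun j => ?_⟩
    obtain ⟨w, hw, h⟩ := hp (j - j0)
    refine ⟨w, hw, fun i hi => ?_⟩
    rw [← h i hi, hpr]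
    congr 1
    ring
  · rintro ⟨r, hr⟩
    exact ⟨_, hr⟩

theorem Coding.isCompact_parsedSet [T2Space B] (hC : Coding f S Adj H) (L : Level B c) :
    IsCompact (parsedSet S H L) := by
  have : CompactSpace S := isCompact_iff_compactSpace.1 hC.compact
  have hcont : ∀ i, Continuous fun x : S => H x i :=
    fun i => continuousOn_iff_continuous_domRestrict.1 (hC.cont i)
  have hcl : IsClosed {x : S | Parsed L (H x)} := by
    simp only [parsed_iff_lt, Set.ofPred_exists, Set.ofPred_forall]
    refine isClosed_iUnion_of_finite fun r => isClosed_iInter fun j => ?_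
    have : {x : S | ∃ w ∈ L.words, ∀ i : ℕ, i < L.len → H x ((r : ℕ) + j * L.len + i) = w i} =
        ⋃ w ∈ L.words, ⋂ (i : ℕ) (_ : i < L.len), {x : S | H x ((r : ℕ) + j * L.len + i) = w i} := by
      ext x; simp
    have h2 : IsClosed (⋃ w ∈ L.words, ⋂ (i : ℕ) (_ : i < L.len),
        {x : S | H x ((r : ℕ) + j * L.len + i) = w i}) := by
      refine Set.Finite.isClosed_biUnion (Finset.finite_toSet _) fun w _ => ?_
      exact isClosed_iInter fun i => isClosed_iInter fun _ => isClosed_eq (hcont _) continuous_const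
    rw [← this] at h2
    convert h2 using 1
    ext x; simp
  have := hcl.isCompact.image continuous_subtype_val
  convert this using 1
  ext x
  simp [parsedSet, and_comm]

theorem Coding.parsed_shift_iff (hC : Coding f S Adj H) (L : Level B c) {x : X} (hx : x ∈ S) :
    Parsed L (H (f x)) ↔ Parsed L (H x) := by
  constructor
  · rintro ⟨p, hp⟩
    refine ⟨p + 1, fun j => ?_⟩
    obtain ⟨w, hw, h⟩ := hp j
    refine ⟨w, hw, fun i hi => ?_⟩
    rw [← h i hi, hC.shift x hx]
    congr 1; ring
  · rintro ⟨p, hp⟩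
    refine ⟨p - 1, fun j => ?_⟩
    obtain ⟨w, hw, h⟩ := hp j
    refine ⟨w, hw, fun i hi => ?_⟩
    rw [← h i hi, hC.shift x hx]
    congr 1; ring

/-- The `ℤ`-periodic repetition of the first `l` letters of `u`. -/
def periodic (u : ℕ → B) (l : ℕ) : ℤ → B := fun i => u (i % l).toNat

theorem periodic_apply (u : ℕ → B) {l r : ℕ} (j : ℤ) (hr : r < l) :
    periodic u l (j * l + r) = u r := by
  rw [periodic, (div_mod_unique j hr).2]

theorem parsed_periodic (L : Level B c) {u : ℕ → B} (hu : u ∈ L.words) :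
    Parsed L (periodic u L.len) :=
  ⟨0, fun j => ⟨u, hu, fun i hi => by rw [zero_add, periodic_apply u j hi]⟩⟩

theorem parsed_mono {Lv : ℕ → Level B c} (h : ∀ k, Refines (Lv k) (Lv (k + 1))) {z : ℤ → B}
    {k m : ℕ} (hkm : k ≤ m) (hz : Parsed (Lv m) z) : Parsed (Lv k) z := by
  induction hkm with
  | refl => exact hz
  | step _ ih => exact ih ((h _).parsed hz)

theorem Coding.exists_periodic (hC : Coding f S Adj H) {Lv : ℕ → Level B c}
    (h : ∀ k, Refines (Lv k) (Lv (k + 1))) (h0 : ∀ z, Parsed (Lv 0) z → z ∈ vertexShift Adj)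
    (k : ℕ) {u : ℕ → B} (hu : u ∈ (Lv k).words) :
    ∃ x ∈ parsedSet S H (Lv k), H x = periodic u (Lv k).len := by
  have hp := parsed_periodic (Lv k) hu
  obtain ⟨x, hx, hHx⟩ := hC.surj _ (h0 _ (parsed_mono h (Nat.zero_le k) hp))
  exact ⟨x, ⟨hx, hHx ▸ hp⟩, hHx⟩

theorem words_nonempty (L : Level B c) : L.words.Nonempty := by
  rw [← Finset.card_pos]
  have := L.big
  have h2 : (0 : ℝ) < L.words.card := (Real.exp_pos _).trans this
  exact_mod_cast h2

/-- The limit set is the intersection of a decreasing sequence of nonempty compact sets. -/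
theorem Coding.limitSet_spec [T2Space B] (hC : Coding f S Adj H) {Lv : ℕ → Level B c}
    (h : ∀ k, Refines (Lv k) (Lv (k + 1))) (h0 : ∀ z, Parsed (Lv 0) z → z ∈ vertexShift Adj) :
    (limitSet S H Lv).Nonempty ∧ IsClosed (limitSet S H Lv) ∧
      f '' (limitSet S H Lv) = limitSet S H Lv := by
  have hcomp := fun k => hC.isCompact_parsedSet (Lv k)
  refine ⟨?_, isClosed_iInter fun k => (hcomp k).isClosed, ?_⟩
  · refine IsCompact.nonempty_iInter_of_sequence_nonempty_isCompact_isClosed _ ?_ ?_ (hcomp 0)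
      fun k => (hcomp k).isClosed
    · exact fun k x hx => ⟨hx.1, (h k).parsed hx.2⟩
    · intro k
      obtain ⟨u, hu⟩ := words_nonempty (Lv k)
      obtain ⟨x, hx, _⟩ := hC.exists_periodic h h0 k hu
      exact ⟨x, hx⟩
  · apply Subset.antisymm
    · rintro _ ⟨x, hx, rfl⟩
      refine mem_iInter.2 fun k => ?_
      have := mem_iInter.1 hx k
      exact ⟨hC.maps _ this.1, (hC.parsed_shift_iff _ this.1).2 this.2⟩
    · intro x hx
      have hxS := (mem_iInter.1 hx 0).1
      rw [← hC.image] at hxS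
      obtain ⟨y, hy, rfl⟩ := hxS
      refine ⟨y, mem_iInter.2 fun k => ⟨hy, ?_⟩, rfl⟩
      exact (hC.parsed_shift_iff _ hy).1 (mem_iInter.1 hx k).2

/-- The words of length `n` in concatenations from `L`: a phase and at most `n / len + 2` words
of `L` determine them. -/
theorem word_count [T2Space B] (L : Level B c) (n : ℕ) : ∃ T : Set (ℕ → B), T.Finite ∧
    T.ncard ≤ L.len * L.words.card ^ (n / L.len + 2) ∧
    ∀ z, Parsed L z → ∀ p : ℤ, ∃ w ∈ T, ∀ i : ℕ, i < n → z (p + i) = w i := by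
  classical
  set q := n / L.len + 2 with hq
  have hq0 : 0 < q := Nat.succ_pos _
  have hl := L.len_pos
  let F : Fin L.len × (Fin q → {w // w ∈ L.words}) → ℕ → B := fun a i =>
    (a.2 ⟨((a.1 : ℕ) + i) / L.len % q, Nat.mod_lt _ hq0⟩).1 (((a.1 : ℕ) + i) % L.len)
  refine ⟨range F, finite_range F, ?_, ?_⟩
  · rw [← Set.image_univ]
    refine (Set.ncard_image_le finite_univ).trans ?_
    rw [Set.ncard_univ, Nat.card_eq_fintype_card]
    simp
  · rintro z ⟨p0, hp0⟩ p
    choose w hw hz using hp0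
    obtain ⟨j0, r, hr, hpr⟩ := exists_div_mod (p - p0) L.len_pos
    refine ⟨_, ⟨(⟨r, hr⟩, fun j => ⟨w (j0 + (j : ℕ)), hw _⟩), rfl⟩, fun i hi => ?_⟩
    have hlt : (r + i) / L.len < q := by
      have h1 := Nat.div_add_mod n L.len
      have h2 := Nat.mod_lt n hl
      rw [Nat.div_lt_iff_lt_mul hl, hq]
      nlinarith
    simp only [F, Nat.mod_eq_of_lt hlt]
    rw [← hz _ _ (Nat.mod_lt _ hl)]
    congr 1
    have h3 := Nat.div_add_mod (r + i) L.len
    have h4 : (L.len : ℤ) * ((r + i) / L.len : ℕ) + ((r + i) % L.len : ℕ) = r + i := by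
      exact_mod_cast h3
    linear_combination hpr - h4

/-- The entropy of the limit set is at most `c`, because a deep level has about `exp (c len)` words and
the number `n / len + 2` of words needed to cover a window of length `n` is counted by `word_count`. -/
theorem Coding.entropy_limitSet_le [T2Space B] (hC : Coding f S Adj H) (hc : 0 ≤ c)
    {Lv : ℕ → Level B c} (h : ∀ k, Refines (Lv k) (Lv (k + 1)))
    {D : Set X} (hD : D ⊆ limitSet S H Lv) :
    topEntropyOn f D ≤ c ∧ ∀ n ε, 0 < ε →
      BddAbove {k : ℕ | ∃ Q : Finset X, ↑Q ⊆ D ∧ IsDynSep f n ε ↑Q ∧ Q.card = k} := by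
  have hDk : ∀ x ∈ D, ∀ k, x ∈ parsedSet S H (Lv k) := fun x hx k => mem_iInter.1 (hD hx) k
  refine hC.entropy_le (fun x hx => (hDk x hx 0).1) hc fun η hη => ?_
  obtain ⟨k, hk⟩ := exists_nat_gt (1 / η)
  have hkl : (k : ℝ) ≤ (Lv (k + 1)).len := by
    exact_mod_cast (Nat.le_succ k).trans (len_tendsto h (k + 1))
  obtain ⟨_, _, _, hcard, _⟩ := h k
  set L := Lv (k + 1) with hL
  have hl0 : (0 : ℝ) < L.len := by exact_mod_cast L.len_pos
  have hl1 : (1 : ℝ) ≤ L.len := by exact_mod_cast L.len_pos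
  have hN1 : (1 : ℝ) ≤ L.words.card := by exact_mod_cast Finset.card_pos.2 (words_nonempty L)
  have hlη : 1 ≤ η * L.len := by
    rw [div_lt_iff₀ hη] at hk
    nlinarith
  have hcard' : (L.words.card : ℝ) ≤ Real.exp ((c + η) * L.len) := by
    have h1 : (1 : ℝ) ≤ Real.exp (c * L.len) := Real.one_le_exp (by positivity)
    have h2 : (2 : ℝ) ≤ Real.exp (η * L.len) := by
      have := Real.add_one_le_exp (η * L.len)
      linarith
    rw [add_mul, Real.exp_add]
    nlinarith
  refine ⟨L.len * (L.words.card : ℝ) ^ 2, one_le_mul_of_one_le_of_one_le hl1 (one_le_pow₀ hN1),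
    fun n => ?_⟩
  obtain ⟨T, hT, hTc, hTw⟩ := word_count L n
  refine ⟨T, hT, ?_, fun x hx p => hTw _ (hDk x hx _).2 p⟩
  calc (T.ncard : ℝ) ≤ L.len * (L.words.card : ℝ) ^ (n / L.len + 2) := by exact_mod_cast hTc
    _ = L.len * (L.words.card : ℝ) ^ 2 * (L.words.card : ℝ) ^ (n / L.len) := by
        rw [pow_add]; ring
    _ ≤ L.len * (L.words.card : ℝ) ^ 2 * Real.exp ((c + η) * n) := by
        gcongr
        calc (L.words.card : ℝ) ^ (n / L.len) ≤ Real.exp ((c + η) * L.len) ^ (n / L.len) := by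
              gcongr
          _ = Real.exp ((c + η) * (L.len * (n / L.len : ℕ))) := by
              rw [← Real.exp_nat_mul]; congr 1; ring
          _ ≤ _ := by
              gcongr
              exact_mod_cast Nat.mul_div_le n L.len

end Parsed

/-! ### Uniform convergence of time averages -/

section Averages

variable {X B : Type*} [MetricSpace X] [TopologicalSpace B] {f : X → X} {S : Set X}
  {Adj : B → B → Prop} {H : X → ℤ → B} {c : ℝ}

/-- `g` is bounded by `G` on `S` and is determined up to any `ε` by a finite window of the code. -/
def WindowFun (S : Set X) (H : X → ℤ → B) (g : X → ℝ) (G : ℝ) : Prop :=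
  (∀ x ∈ S, |g x| ≤ G) ∧ ∀ ε : ℝ, 0 < ε → ∃ k : ℕ, ∀ x ∈ S, ∀ y ∈ S,
    (∀ i : ℤ, |i| ≤ k → H x i = H y i) → |g x - g y| ≤ ε

theorem birkhoffSum_mul (f : X → X) (g : X → ℝ) (M l : ℕ) (x : X) :
    birkhoffSum f g (M * l) x = ∑ j ∈ Finset.range M, birkhoffSum f g l (f^[j * l] x) := by
  induction M with
  | zero => simp
  | succ M ih => rw [add_mul, one_mul, birkhoffSum_add, ih, Finset.sum_range_succ]

theorem Coding.abs_birkhoffSum_le (hC : Coding f S Adj H) {g : X → ℝ} {G : ℝ}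
    (hg : ∀ x ∈ S, |g x| ≤ G) {x : X} (hx : x ∈ S) (n : ℕ) : |birkhoffSum f g n x| ≤ n * G := by
  unfold birkhoffSum
  refine (Finset.abs_sum_le_sum_abs _ _).trans ?_
  refine (Finset.sum_le_card_nsmul _ _ G fun j _ => hg _ (hC.iter_mem hx j)).trans ?_
  simp

/-- Two points with the same code on `[0, l)` have nearly the same Birkhoff sums of length `l`:
only the `2 k` indices close to the ends may contribute more than `η`. -/
theorem Coding.block_close (hC : Coding f S Adj H) {g : X → ℝ} {G η : ℝ}
    (hg : ∀ x ∈ S, |g x| ≤ G) {k : ℕ}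
    (hk : ∀ x ∈ S, ∀ y ∈ S, (∀ i : ℤ, |i| ≤ k → H x i = H y i) → |g x - g y| ≤ η)
    (hη : 0 ≤ η) {x y : X} (hx : x ∈ S) (hy : y ∈ S) {l : ℕ}
    (hxy : ∀ i : ℕ, i < l → H x i = H y i) :
    |birkhoffSum f g l x - birkhoffSum f g l y| ≤ l * η + 4 * k * G := by
  have hG : 0 ≤ G := (abs_nonneg _).trans (hg x hx)
  unfold birkhoffSum
  rw [← Finset.sum_sub_distrib]
  refine (Finset.abs_sum_le_sum_abs _ _).trans ?_
  have hterm : ∀ j ∈ Finset.range l, |g (f^[j] x) - g (f^[j] y)| ≤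
      η + ((if j < k then 2 * G else 0) + (if l ≤ j + k then 2 * G else 0)) := by
    intro j hj
    rw [Finset.mem_range] at hj
    have h2G : |g (f^[j] x) - g (f^[j] y)| ≤ 2 * G := by
      refine (abs_sub _ _).trans ?_
      linarith [hg _ (hC.iter_mem hx j), hg _ (hC.iter_mem hy j)]
    by_cases h1 : j < k
    · rw [if_pos h1]
      split_ifs <;> linarith
    · by_cases h2 : l ≤ j + k
      · rw [if_pos h2]
        split_ifs; linarith
      · rw [if_neg h1, if_neg h2]
        simp only [add_zero]
        refine hk _ (hC.iter_mem hx j) _ (hC.iter_mem hy j) fun i hi => ?_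
        rw [hC.iter hx, hC.iter hy]
        rw [abs_le] at hi
        obtain ⟨m, hm⟩ : ∃ m : ℕ, i + j = m := ⟨(i + j).toNat, by omega⟩
        rw [hm]
        exact hxy m (by omega)
  refine (Finset.sum_le_sum hterm).trans ?_
  rw [Finset.sum_add_distrib, Finset.sum_add_distrib, ← Finset.sum_filter, ← Finset.sum_filter]
  simp only [Finset.sum_const, nsmul_eq_mul, Finset.card_range]
  have c1 : ((Finset.range l).filter fun j => j < k).card ≤ k := by
    calc _ ≤ (Finset.range k).card := Finset.card_le_card fun j hj => by
          simpa using (Finset.mem_filter.1 hj).2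
      _ = k := Finset.card_range k
  have c2 : ((Finset.range l).filter fun j => l ≤ j + k).card ≤ k := by
    calc _ ≤ (Finset.Ico (l - k) l).card := Finset.card_le_card fun j hj => by
          have := Finset.mem_filter.1 hj
          simp only [Finset.mem_range] at this
          simp only [Finset.mem_Ico]
          omega
      _ ≤ k := by rw [Nat.card_Ico]; omega
  have c1' : ((((Finset.range l).filter fun j => j < k).card : ℕ) : ℝ) ≤ k := by exact_mod_cast c1
  have c2' : ((((Finset.range l).filter fun j => l ≤ j + k).card : ℕ) : ℝ) ≤ k := by
    exact_mod_cast c2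
  have e1 := mul_le_mul_of_nonneg_right c1' (by linarith : 0 ≤ 2 * G)
  have e2 := mul_le_mul_of_nonneg_right c2' (by linarith : 0 ≤ 2 * G)
  linarith

/-- The Birkhoff averages of a window function are almost constant on the points parsed by a
sufficiently deep level, because all words of a level contain every word of the preceding level
with the same multiplicity. -/
theorem Coding.uniform_averages (hC : Coding f S Adj H) {Lv : ℕ → Level B c}
    (h : ∀ k, Refines (Lv k) (Lv (k + 1))) (h0 : ∀ z, Parsed (Lv 0) z → z ∈ vertexShift Adj)
    {g : X → ℝ} {G : ℝ} (hg : WindowFun S H g G) {ε : ℝ} (hε : 0 < ε) :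
    ∃ K n0 : ℕ, ∀ n ≥ n0, ∀ x ∈ parsedSet S H (Lv K), ∀ y ∈ parsedSet S H (Lv K),
      |birkhoffSum f g n x - birkhoffSum f g n y| ≤ ε * n := by
  obtain ⟨hgG, hgw⟩ := hg
  set η := ε / 6 with hη
  have hη0 : 0 < η := by positivity
  obtain ⟨k, hk⟩ := hgw η hη0
  have hG : 0 ≤ G := by
    obtain ⟨u, hu⟩ := words_nonempty (Lv 0)
    obtain ⟨x, hx, _⟩ := hC.exists_periodic h h0 0 hu
    exact (abs_nonneg _).trans (hgG x hx.1)
  -- At this level the boundary effects of `block_close` are small relative to the word length.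
  obtain ⟨K0, hK0⟩ := exists_nat_ge (4 * k * G / η)
  have hKl : (K0 : ℝ) ≤ (Lv K0).len := by exact_mod_cast len_tendsto h K0
  obtain ⟨M, hM, hlen, _, C, hs⟩ := h K0
  set L := Lv K0 with hL
  set L' := Lv (K0 + 1) with hL'
  have hlη : 4 * k * G ≤ L.len * η := by
    rw [div_le_iff₀ hη0] at hK0
    nlinarith
  -- From `n0` on, the phase and the incomplete last word of a parsing are negligible.
  obtain ⟨n0, hn0⟩ := exists_nat_ge (3 * L'.len * G / η)
  rw [div_le_iff₀ hη0] at hn0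
  have href : ∀ w, ∃ y, w ∈ L.words → y ∈ S ∧ ∀ i : ℕ, i < L.len → H y i = w i := by
    intro w
    by_cases hw : w ∈ L.words
    · obtain ⟨y, hy, hHy⟩ := hC.exists_periodic h h0 K0 hw
      refine ⟨y, fun _ => ⟨hy.1, fun i hi => ?_⟩⟩
      have := periodic_apply w 0 hi
      rw [hHy, ← this]
      simp [hL]
    · obtain ⟨u, hu⟩ := words_nonempty (Lv 0)
      obtain ⟨x, hx, _⟩ := hC.exists_periodic h h0 0 hu
      exact ⟨x, fun h => absurd h hw⟩
  -- `ref w` is a point whose code begins with `w`, and `φ w` its Birkhoff sum over that word. The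
  -- Birkhoff sum over a word of `L'` is then close to `C φ`, which does not depend on the word.
  choose ref href using href
  set φ : (ℕ → B) → ℝ := fun w => birkhoffSum f g L.len (ref w) with hφ
  have claim2 : ∀ x ∈ S, ∀ w' ∈ L'.words, (∀ i : ℕ, i < L'.len → H x i = w' i) →
      |birkhoffSum f g L'.len x - C φ| ≤ M * (2 * L.len * η) := by
    intro x hx w' hw' hxw
    obtain ⟨s, hs, hsum⟩ := hs w' hw'
    rw [← hsum φ, hlen, birkhoffSum_mul, ← Finset.sum_sub_distrib]
    refine (Finset.abs_sum_le_sum_abs _ _).trans ?_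
    refine (Finset.sum_le_card_nsmul _ _ (2 * L.len * η) fun j hj => ?_).trans (by simp)
    rw [Finset.mem_range] at hj
    obtain ⟨hsj, hsj'⟩ := hs j hj
    obtain ⟨hr1, hr2⟩ := href _ hsj
    refine (hC.block_close hgG hk hη0.le (hC.iter_mem hx _) hr1 fun i hi => ?_).trans (by linarith)
    rw [hC.iter hx, hr2 i hi, ← hsj' i hi, ← hxw]
    · push_cast; congr 1; ring
    · rw [hlen]
      calc j * L.len + i < (j + 1) * L.len := by rw [add_mul, one_mul]; omega
        _ ≤ _ := Nat.mul_le_mul_right _ hj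
  have claim3 : ∀ n ≥ n0, ∀ x ∈ parsedSet S H L',
      |birkhoffSum f g n x - (n / L'.len : ℕ) * C φ| ≤ 3 * η * n := by
    rintro n hn x ⟨hx, hpx⟩
    rw [parsed_iff_lt] at hpx
    obtain ⟨r, hr⟩ := hpx
    set q := n / L'.len with hq
    have hblocks : |birkhoffSum f g (q * L'.len) (f^[r] x) - q * C φ| ≤ q * (M * (2 * L.len * η)) := by
      have : (q : ℝ) * C φ = ∑ _j ∈ Finset.range q, C φ := by simp
      rw [this, birkhoffSum_mul, ← Finset.sum_sub_distrib]
      refine (Finset.abs_sum_le_sum_abs _ _).trans ?_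
      refine (Finset.sum_le_card_nsmul _ _ (M * (2 * L.len * η)) fun j _ => ?_).trans (by simp)
      obtain ⟨w', hw', hz⟩ := hr j
      refine claim2 _ (hC.iter_mem (hC.iter_mem hx _) _) w' hw' fun i hi => ?_
      rw [hC.iter (hC.iter_mem hx _), hC.iter hx, ← hz i hi]
      push_cast; congr 1; ring
    have hqM : (q : ℝ) * (M * (2 * L.len * η)) ≤ 2 * η * n := by
      have h1 : (q * L'.len : ℕ) ≤ n := Nat.div_mul_le_self n L'.len
      rw [hlen] at h1
      have h2 : (q : ℝ) * (M * L.len) ≤ n := by exact_mod_cast h1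
      nlinarith
    -- Pass from the sum starting at the phase `r` to the sum starting at `0`, and from `q * len` terms
    -- to `n`; each of the three corrections costs at most `len * G`.
    have e1 := birkhoffSum_add f g r (q * L'.len) x
    have e2 := birkhoffSum_add f g (q * L'.len) r x
    have e3 := birkhoffSum_add f g (q * L'.len) (n % L'.len) x
    have hdm : q * L'.len + n % L'.len = n := by rw [mul_comm]; exact Nat.div_add_mod n L'.len
    rw [hdm] at e3
    rw [add_comm (r : ℕ), e2] at e1
    have b1 := hC.abs_birkhoffSum_le hgG hx r
    have b2 := hC.abs_birkhoffSum_le hgG (hC.iter_mem hx (q * L'.len)) r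
    have b3 := hC.abs_birkhoffSum_le hgG (hC.iter_mem hx (q * L'.len)) (n % L'.len)
    have hrl : ((r : ℕ) : ℝ) * G ≤ L'.len * G := by
      gcongr; exact_mod_cast r.2.le
    have hsl : ((n % L'.len : ℕ) : ℝ) * G ≤ L'.len * G := by
      gcongr; exact_mod_cast (Nat.mod_lt _ L'.len_pos).le
    have hnn : 3 * L'.len * G ≤ n * η := by
      have : (n0 : ℝ) ≤ n := by exact_mod_cast hn
      nlinarith
    rw [abs_le] at hblocks b1 b2 b3 ⊢
    constructor <;> linarith
  refine ⟨K0 + 1, n0, fun n hn x hx y hy => ?_⟩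
  have h1 := claim3 n hn x hx
  have h2 := claim3 n hn y hy
  have : ε = 6 * η := by rw [hη]; ring
  rw [this]
  rw [abs_le] at h1 h2 ⊢
  constructor <;> linarith

theorem integral_birkhoffSum [MeasurableSpace X] (μ : Measure X) (hμ : MeasurePreserving f μ μ)
    {g : X → ℝ} (hg : Integrable g μ) (n : ℕ) :
    Integrable (birkhoffSum f g n) μ ∧ ∫ x, birkhoffSum f g n x ∂μ = n * ∫ x, g x ∂μ := by
  have hi : ∀ j : ℕ, Integrable (fun x => g (f^[j] x)) μ := fun j =>
    (hμ.iterate j).integrable_comp_of_integrable hg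
  have he : birkhoffSum f g n = fun x => ∑ j ∈ Finset.range n, g (f^[j] x) := rfl
  rw [he]
  refine ⟨integrable_finsetSum _ fun j _ => hi j, ?_⟩
  rw [integral_finsetSum _ fun j _ => hi j]
  have : ∀ j : ℕ, ∫ x, g (f^[j] x) ∂μ = ∫ x, g x ∂μ := by
    intro j
    have hm := (hμ.iterate j)
    have := integral_map hm.measurable.aemeasurable (f := g) (by
      rw [hm.map_eq]; exact hg.aestronglyMeasurable)
    rw [hm.map_eq] at this
    exact this.symm
  simp [this]

/-- Time averages are uniformly close to the space average, for any invariant measure carried by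
points that are parsed by all levels. -/
theorem Coding.averages_near_integral [MeasurableSpace X] (hC : Coding f S Adj H)
    {Lv : ℕ → Level B c}
    (h : ∀ k, Refines (Lv k) (Lv (k + 1))) (h0 : ∀ z, Parsed (Lv 0) z → z ∈ vertexShift Adj)
    (μ : Measure X) [IsProbabilityMeasure μ] (hμ : MeasurePreserving f μ μ)
    (hμD : μ (limitSet S H Lv)ᶜ = 0)
    {g : X → ℝ} {G : ℝ} (hg : WindowFun S H g G) (hgi : Integrable g μ) {ε : ℝ} (hε : 0 < ε) :
    ∃ K n0 : ℕ, ∀ n ≥ n0, ∀ x ∈ parsedSet S H (Lv K),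
      |birkhoffSum f g n x - n * ∫ y, g y ∂μ| ≤ ε * n := by
  obtain ⟨K, n0, hK⟩ := hC.uniform_averages h h0 hg hε
  refine ⟨K, n0, fun n hn x hx => ?_⟩
  obtain ⟨hi, hI⟩ := integral_birkhoffSum μ hμ hgi n
  have hae : ∀ᵐ y ∂μ, |birkhoffSum f g n y - birkhoffSum f g n x| ≤ ε * n := by
    have : ∀ᵐ y ∂μ, y ∈ limitSet S H Lv := by rw [ae_iff]; exact hμD
    filter_upwards [this] with y hy
    exact hK n hn y (mem_iInter.1 hy K) x hx
  have h1 : |∫ y, (birkhoffSum f g n y - birkhoffSum f g n x) ∂μ| ≤ ε * n := by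
    have := norm_integral_le_of_norm_le_const (μ := μ) (C := ε * n)
      (f := fun y => birkhoffSum f g n y - birkhoffSum f g n x) hae
    simpa using this
  rw [integral_sub hi (integrable_const _), hI] at h1
  rw [abs_sub_comm]
  simpa using h1

/-- Two invariant measures carried by the limit set agree: the integrals of a continuous function are
both close to its time averages. -/
theorem Coding.unique_measure [T2Space B] [CompactSpace X] [MeasurableSpace X] [BorelSpace X]
    (hC : Coding f S Adj H) {Lv : ℕ → Level B c}
    (h : ∀ k, Refines (Lv k) (Lv (k + 1))) (h0 : ∀ z, Parsed (Lv 0) z → z ∈ vertexShift Adj)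
    (μ ν : Measure X) [IsProbabilityMeasure μ] [IsProbabilityMeasure ν]
    (hμ : MeasurePreserving f μ μ) (hν : MeasurePreserving f ν ν)
    (hμD : μ (limitSet S H Lv)ᶜ = 0) (hνD : ν (limitSet S H Lv)ᶜ = 0) : ν = μ := by
  refine ext_of_forall_integral_eq_of_IsFiniteMeasure fun g => ?_
  have hg : WindowFun S H g ‖g‖ := by
    refine ⟨fun x _ => g.norm_coe_le_norm x, fun ε hε => ?_⟩
    obtain ⟨k, hk⟩ := hC.window g.continuous.continuousOn hε
    exact ⟨k, fun x hx y hy hxy => (hk x hx y hy hxy).le⟩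
  by_contra hne
  have hpos : 0 < |∫ x, g x ∂ν - ∫ x, g x ∂μ| := abs_pos.2 (sub_ne_zero.2 hne)
  set δ := |∫ x, g x ∂ν - ∫ x, g x ∂μ| with hδ
  obtain ⟨K, n0, hK⟩ := hC.averages_near_integral h h0 μ hμ hμD hg (g.integrable μ)
    (ε := δ / 3) (by positivity)
  obtain ⟨K', n0', hK'⟩ := hC.averages_near_integral h h0 ν hν hνD hg (g.integrable ν)
    (ε := δ / 3) (by positivity)
  set k := max K K'
  obtain ⟨u, hu⟩ := words_nonempty (Lv k)
  obtain ⟨x, hx, _⟩ := hC.exists_periodic h h0 k hu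
  set n := max (max n0 n0') 1
  have hn : (1 : ℝ) ≤ n := by exact_mod_cast le_max_right _ _
  have h1 := hK n ((le_max_left _ _).trans (le_max_left _ _)) x
    ⟨hx.1, parsed_mono h (le_max_left _ _) hx.2⟩
  have h2 := hK' n ((le_max_right _ _).trans (le_max_left _ _)) x
    ⟨hx.1, parsed_mono h (le_max_right _ _) hx.2⟩
  have h3 : n * δ ≤ 2 * (δ / 3) * n := by
    have : n * δ = |(birkhoffSum f g n x - n * ∫ y, g y ∂μ) -
        (birkhoffSum f g n x - n * ∫ y, g y ∂ν)| := by
      rw [hδ, ← abs_of_nonneg (by linarith : (0 : ℝ) ≤ n), ← abs_mul,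
        abs_of_nonneg (by linarith : (0 : ℝ) ≤ n)]
      congr 1; ring
    rw [this]
    refine (abs_sub _ _).trans ?_
    linarith
  nlinarith

end Averages

/-! ### Lower bound for the entropy of the invariant measure -/

section BlockEntropy

theorem sum_range_mul_eq (g : ℕ → ℝ) (q n : ℕ) :
    ∑ s ∈ Finset.range (q * n), g s
      = ∑ i ∈ Finset.range q, ∑ t ∈ Finset.range n, g (t + i * n) := by
  induction q with
  | zero => simp
  | succ q ih =>
    rw [add_mul, one_mul, Finset.sum_range_add, ih, Finset.sum_range_succ]
    simp only [add_comm]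

variable {U κ : Type*} [Fintype U] [Fintype κ] [DecidableEq κ]

/-- The word of length `n` read off the sequence `x` from position `s` on. -/
def block (n : ℕ) (x : ℕ → κ) (s : ℕ) : Fin n → κ := fun i => x (s + i)

/-- The frequency of the word `a` at the positions below `l` of the sequences `x u`, averaged over
all `u`. -/
noncomputable def freq (l n : ℕ) (x : U → ℕ → κ) (a : Fin n → κ) : ℝ :=
  (∑ u, ∑ s ∈ Finset.range l, if block n (x u) s = a then (1 : ℝ) else 0) / (Fintype.card U * l)

variable {l n : ℕ} {x : U → ℕ → κ}

theorem freq_nonneg (a : Fin n → κ) : 0 ≤ freq l n x a :=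
  div_nonneg (Finset.sum_nonneg fun _ _ => Finset.sum_nonneg fun _ _ => by split_ifs <;> simp)
    (by positivity)

theorem sum_freq_mul [Nonempty U] (hl : 1 ≤ l) (g : (Fin n → κ) → ℝ) :
    ∑ a, freq l n x a * g a
      = (∑ u, ∑ s ∈ Finset.range l, g (block n (x u) s)) / (Fintype.card U * l) := by
  have h : ∀ u, ∀ s, g (block n (x u) s)
      = ∑ a, (if block n (x u) s = a then (1 : ℝ) else 0) * g a := by
    intro u s; simp
  simp_rw [h, freq, div_mul_eq_mul_div, ← Finset.sum_div, Finset.sum_mul]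
  congr 1
  rw [Finset.sum_comm]
  refine Finset.sum_congr rfl fun u _ => ?_
  rw [Finset.sum_comm]

theorem sum_freq [Nonempty U] (hl : 1 ≤ l) : ∑ a, freq l n x a = 1 := by
  have := sum_freq_mul (n := n) (x := x) hl fun _ => 1
  simp only [mul_one] at this
  rw [this]
  have hl' : (0 : ℝ) < l := by exact_mod_cast hl
  have hU : (0 : ℝ) < Fintype.card U := by exact_mod_cast Fintype.card_pos
  simp only [Finset.sum_const, Finset.card_univ, Finset.card_range, nsmul_eq_mul, mul_one]
  exact div_self (by positivity)

theorem freq_le_one [Nonempty U] (hl : 1 ≤ l) (a : Fin n → κ) : freq l n x a ≤ 1 := by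
  rw [← sum_freq (n := n) (x := x) hl]
  exact Finset.single_le_sum (f := freq l n x) (fun b _ => freq_nonneg b) (Finset.mem_univ a)

theorem freq_pos [Nonempty U] {s : ℕ} (hs : s < l) (u : U) : 0 < freq l n x (block n (x u) s) := by
  have hl' : (0 : ℝ) < l := by exact_mod_cast (by omega : 0 < l)
  have hU : (0 : ℝ) < Fintype.card U := by exact_mod_cast Fintype.card_pos
  refine div_pos ?_ (by positivity)
  refine Finset.sum_pos' (fun _ _ => Finset.sum_nonneg fun _ _ => by split_ifs <;> simp)
    ⟨u, Finset.mem_univ u, ?_⟩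
  exact Finset.sum_pos' (fun _ _ => by split_ifs <;> simp) ⟨s, Finset.mem_range.2 hs, by simp⟩

/-- If the sequences `x u` are distinguished by their first `l` symbols, they are also distinguished
by a prefix, a suffix and the `l / n` consecutive blocks of length `n` starting at `t`. Comparing the
uniform distribution on `U` with the product of the block frequencies (Gibbs' inequality) bounds the
number of sequences. -/
theorem log_card_le_shift [Nonempty U] [Nonempty κ] (hn : 1 ≤ n) (hl : 1 ≤ l)
    (hinj : ∀ u v, (∀ i < l, x u i = x v i) → u = v) {t : ℕ} (ht : t < n) :
    (Fintype.card U : ℝ) * Real.log (Fintype.card U)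
      ≤ Fintype.card U * (2 * n * Real.log (Fintype.card κ))
        + ∑ u, ∑ i ∈ Finset.range (l / n), -Real.log (freq l n x (block n (x u) (t + i * n))) := by
  set q := l / n with hq
  have hqn : q * n ≤ l := Nat.div_mul_le_self l n
  have hqn' : l < (q + 1) * n := by
    rw [hq]; exact Nat.lt_mul_of_div_lt (Nat.lt_succ_self _) (by omega)
  have hU : (0 : ℝ) < Fintype.card U := by exact_mod_cast Fintype.card_pos
  have hκ : (0 : ℝ) < Fintype.card κ := by exact_mod_cast Fintype.card_pos
  set K : ℝ := (Fintype.card κ : ℝ) ^ n with hK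
  have hKpos : 0 < K := by positivity
  have hKcard : ((Fintype.card (Fin n → κ) : ℕ) : ℝ) = K := by simp [hK]
  -- Prefix, `q` consecutive blocks, suffix; some symbols may be read twice or beyond index `l`.
  let F : U → (Fin n → κ) × (Fin q → Fin n → κ) × (Fin n → κ) := fun u =>
    (block n (x u) 0, fun i => block n (x u) (t + i * n), block n (x u) (t + q * n))
  have hF : Function.Injective F := by
    intro u v huv
    refine hinj u v fun j hj => ?_
    simp only [F, Prod.mk.injEq] at huv
    obtain ⟨h1, h2, h3⟩ := huv
    rcases lt_or_ge j t with hjt | hjt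
    · have := congrFun h1 ⟨j, by omega⟩
      simpa [block] using this
    · have hd := Nat.div_add_mod (j - t) n
      have hr := Nat.mod_lt (j - t) (by omega : n > 0)
      set d := (j - t) / n with hdd
      set r := (j - t) % n with hrr
      have hje : j = t + d * n + r := by rw [mul_comm] at hd; omega
      rcases lt_or_ge d q with hdq | hdq
      · have := congrFun (congrFun h2 ⟨d, hdq⟩) ⟨r, hr⟩
        simpa [block, ← hje] using this
      · have hdq' : d < q + 1 := by
          by_contra hcon
          have := Nat.mul_le_mul_right n (not_lt.1 hcon)
          omega
        have hdq2 : d = q := by omega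
        have := congrFun h3 ⟨r, hr⟩
        rw [hdq2] at hje
        simpa [block, ← hje] using this
  -- Block frequencies for the `q` blocks, uniform weights for the prefix and the suffix.
  let W : (Fin n → κ) × (Fin q → Fin n → κ) × (Fin n → κ) → ℝ := fun p =>
    K⁻¹ * ((∏ i, freq l n x (p.2.1 i)) * K⁻¹)
  have hW0 : ∀ p, 0 ≤ W p := fun p => by
    have := Finset.prod_nonneg (s := Finset.univ) fun (i : Fin q) _ =>
      freq_nonneg (l := l) (x := x) (p.2.1 i)
    positivity
  have hpos : ∀ u (i : Fin q), 0 < freq l n x (block n (x u) (t + i * n)) := fun u i => by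
    refine freq_pos ?_ u
    have : ((i : ℕ) + 1) * n ≤ q * n := Nat.mul_le_mul_right n i.2
    rw [add_mul, one_mul] at this
    omega
  have hWF : ∀ u, 0 < W (F u) := fun u => by
    have := Finset.prod_pos (s := Finset.univ) fun (i : Fin q) _ => hpos u i
    simp only [W, F]
    positivity
  have hsum : ∑ p, W p = 1 := by
    have hprod : ∑ b : Fin q → Fin n → κ, ∏ i, freq l n x (b i) = 1 := by
      have := Finset.prod_univ_sum (fun _ : Fin q => (Finset.univ : Finset (Fin n → κ)))
        (fun _ a => freq l n x a)
      simp only [Fintype.piFinset_univ, sum_freq hl, Finset.prod_const_one] at this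
      exact this.symm
    rw [Fintype.sum_prod_type]
    simp only [W, Fintype.sum_prod_type, Finset.sum_const, Finset.card_univ, nsmul_eq_mul, hKcard,
      ← Finset.mul_sum, ← Finset.sum_mul, hprod]
    field_simp
  have hle : ∑ u, W (F u) ≤ 1 := by
    classical
    rw [← hsum, ← Finset.sum_image (f := W) (g := F) (s := Finset.univ) hF.injOn]
    exact Finset.sum_le_sum_of_subset_of_nonneg (Finset.subset_univ _) fun p _ _ => hW0 p
  have hg := gibbs (fun _ : U => (Fintype.card U : ℝ)⁻¹) (fun u => W (F u))
    (fun _ => by positivity) (by simp [hU.ne']) hWF hle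
  have hlogW : ∀ u, -Real.log (W (F u)) = 2 * n * Real.log (Fintype.card κ)
      + ∑ i ∈ Finset.range q, -Real.log (freq l n x (block n (x u) (t + i * n))) := by
    intro u
    have hp := Finset.prod_pos (s := Finset.univ) fun (i : Fin q) _ => hpos u i
    simp only [W, F]
    rw [Real.log_mul (by positivity) (by positivity), Real.log_mul hp.ne' (by positivity),
      Real.log_inv, hK, Real.log_pow, Real.log_prod fun i _ => (hpos u i).ne',
      Finset.sum_neg_distrib,
      Finset.sum_range fun i => Real.log (freq l n x (block n (x u) (t + i * n)))]
    ring
  simp_rw [hlogW, ← Finset.mul_sum, Finset.sum_add_distrib] at hg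
  simp only [EF.negMulLog, Finset.sum_const, Finset.card_univ, nsmul_eq_mul, Real.log_inv] at hg
  have h2 := mul_le_mul_of_nonneg_left hg hU.le
  rw [mul_inv_cancel_left₀ hU.ne'] at h2
  refine le_trans (le_of_eq ?_) h2
  field_simp

/-- The entropy of the block frequencies is at least the exponential growth rate of the number of
sequences, up to a boundary term that vanishes as `l → ∞`. -/
theorem log_card_le [Nonempty U] [Nonempty κ] (hn : 1 ≤ n) (hl : 1 ≤ l)
    (hinj : ∀ u v, (∀ i < l, x u i = x v i) → u = v) :
    n * Real.log (Fintype.card U) ≤ 2 * n ^ 2 * Real.log (Fintype.card κ)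
      + l * ∑ a, EF.negMulLog (freq l n x a) := by
  have hU : (0 : ℝ) < Fintype.card U := by exact_mod_cast Fintype.card_pos
  have hl' : (0 : ℝ) < l := by exact_mod_cast hl
  have h1 := Finset.sum_le_sum fun t (ht : t ∈ Finset.range n) =>
    log_card_le_shift hn hl hinj (Finset.mem_range.1 ht)
  rw [Finset.sum_add_distrib, Finset.sum_const, Finset.sum_const, Finset.card_range, nsmul_eq_mul,
    nsmul_eq_mul] at h1
  have h2 : ∑ t ∈ Finset.range n, ∑ u, ∑ i ∈ Finset.range (l / n),
      -Real.log (freq l n x (block n (x u) (t + i * n)))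
      ≤ ∑ u, ∑ s ∈ Finset.range l, -Real.log (freq l n x (block n (x u) s)) := by
    rw [Finset.sum_comm]
    refine Finset.sum_le_sum fun u _ => ?_
    rw [Finset.sum_comm,
      ← sum_range_mul_eq (fun s => -Real.log (freq l n x (block n (x u) s))) (l / n) n]
    refine Finset.sum_le_sum_of_subset_of_nonneg
      (Finset.range_mono (Nat.div_mul_le_self l n)) fun s _ _ => ?_
    have := Real.log_nonpos (freq_nonneg _) (freq_le_one (x := x) hl (block n (x u) s))
    linarith
  have h3 := sum_freq_mul (n := n) (x := x) hl fun a => -Real.log (freq l n x a)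
  rw [eq_div_iff (by positivity)] at h3
  have h4 : ∑ a, EF.negMulLog (freq l n x a) = ∑ a, freq l n x a * -Real.log (freq l n x a) :=
    Finset.sum_congr rfl fun a _ => by unfold EF.negMulLog; ring
  rw [← h4] at h3
  rw [← h3] at h2
  refine le_of_mul_le_mul_left ?_ hU
  nlinarith [h1, h2]

end BlockEntropy

section LowerBound

variable {X B : Type*} [MetricSpace X] [TopologicalSpace B] {f : X → X} {S : Set X}
  {Adj : B → B → Prop} {H : X → ℤ → B} {c : ℝ}

/-- The partition of `S` by the symbol at `0` of the code, completed by `Sᶜ`. -/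
theorem Coding.exists_partition [Fintype B] [T2Space B] [MeasurableSpace X] [BorelSpace X]
    (hC : Coding f S Adj H) : ∃ P : Finset (Set X), IsMeasPartition P ∧
      ∀ name : X → {p // p ∈ P}, (∀ x (p : {p // p ∈ P}), x ∈ p.1 ↔ name x = p) →
        ∀ x ∈ S, ∀ y ∈ S, name x = name y ↔ H x 0 = H y 0 := by
  classical
  set A : B → Set X := fun b => S ∩ (fun x => H x 0) ⁻¹' {b} with hA
  set P : Finset (Set X) := insert Sᶜ (Finset.univ.image A) with hP
  have hmem : ∀ p, p ∈ P ↔ p = Sᶜ ∨ ∃ b, A b = p := fun p => by simp [hP]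
  have hcl : IsClosed S := hC.compact.isClosed
  refine ⟨P, ⟨?_, ?_, ?_⟩, ?_⟩
  · intro p hp
    rcases (hmem p).1 hp with rfl | ⟨b, rfl⟩
    · exact hcl.measurableSet.compl
    · exact ((hC.cont 0).preimage_isClosed_of_isClosed hcl isClosed_singleton).measurableSet
  · refine eq_univ_of_forall fun x => ?_
    by_cases hx : x ∈ S
    · exact ⟨A (H x 0), (hmem _).2 (Or.inr ⟨_, rfl⟩), hx, rfl⟩
    · exact ⟨Sᶜ, (hmem _).2 (Or.inl rfl), hx⟩
  · intro p hp p' hp' hne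
    rw [Set.disjoint_left]
    intro x hx hx'
    apply hne
    rcases (hmem p).1 hp with rfl | ⟨b, rfl⟩ <;> rcases (hmem p').1 hp' with rfl | ⟨b', rfl⟩
    · rfl
    · exact absurd hx'.1 hx
    · exact absurd hx.1 hx'
    · have h1 : H x 0 = b := hx.2
      have h2 : H x 0 = b' := hx'.2
      rw [← h1, ← h2]
  · intro name hname x hx y hy
    have hp : A (H x 0) ∈ P := (hmem _).2 (Or.inr ⟨_, rfl⟩)
    have hxp : name x = ⟨_, hp⟩ := (hname x ⟨_, hp⟩).1 ⟨hx, rfl⟩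
    rw [hxp, eq_comm, ← hname y ⟨_, hp⟩]
    constructor
    · intro h
      exact h.2.symm
    · intro h
      exact ⟨hy, h.symm⟩

/-- Block entropies of the invariant measure are the limits of the block entropies of the periodic
points of the successive levels. -/
theorem Coding.le_refinedInfo [MeasurableSpace X] [BorelSpace X]
    (hC : Coding f S Adj H) (hf : Measurable f) {Lv : ℕ → Level B c}
    (h : ∀ k, Refines (Lv k) (Lv (k + 1))) (h0 : ∀ z, Parsed (Lv 0) z → z ∈ vertexShift Adj)
    (μ : Measure X) [IsProbabilityMeasure μ] (hμ : MeasurePreserving f μ μ)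
    (hμD : μ (limitSet S H Lv)ᶜ = 0) {P : Finset (Set X)} (hP : IsMeasPartition P)
    {name : X → {p // p ∈ P}} (hname : ∀ x (p : {p // p ∈ P}), x ∈ p.1 ↔ name x = p)
    (hcode : ∀ x ∈ S, ∀ y ∈ S, name x = name y ↔ H x 0 = H y 0) {n : ℕ} (hn : 1 ≤ n) :
    n * c ≤ refinedInfo f μ P n := by
  classical
  obtain ⟨x0⟩ : Nonempty X := nonempty_of_isProbabilityMeasure μ
  have : Nonempty {p // p ∈ P} := ⟨name x0⟩
  have hex := fun k (u : {u // u ∈ (Lv k).words}) => hC.exists_periodic h h0 k u.2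
  choose pt hpt hptH using hex
  let xs : ∀ k, {u // u ∈ (Lv k).words} → ℕ → {p // p ∈ P} := fun k u j => name (f^[j] (pt k u))
  have hne : ∀ k, Nonempty {u // u ∈ (Lv k).words} := fun k =>
    (words_nonempty (Lv k)).to_subtype
  have hcard : ∀ k, Fintype.card {u // u ∈ (Lv k).words} = (Lv k).words.card := fun k => by simp
  have hlen : Tendsto (fun k => ((Lv k).len : ℝ)) atTop atTop :=
    tendsto_natCast_atTop_atTop.comp (tendsto_atTop_mono (len_tendsto h) tendsto_id)
  have hfreq : ∀ a : Fin n → {p // p ∈ P}, Tendsto (fun k => freq (Lv k).len n (xs k) a) atTop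
      (𝓝 (μ (⋂ i : Fin n, f^[(i : ℕ)] ⁻¹' ((a i : Set X)))).toReal) := by
    intro a
    obtain ⟨hgi, hgI⟩ := integral_itin hP hname hf μ n fun b => if b = a then (1 : ℝ) else 0
    simp only [mul_ite, mul_one, mul_zero, Finset.sum_ite_eq', Finset.mem_univ, if_true] at hgI
    set g : X → ℝ := fun x => if itin f name n x = a then (1 : ℝ) else 0 with hg
    have hgw : WindowFun S H g 1 := by
      refine ⟨fun x _ => ?_, fun ε hε => ⟨n, fun x hx y hy hxy => ?_⟩⟩
      · simp only [hg]; split_ifs <;> simp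
      · have : itin f name n x = itin f name n y := by
          funext i
          refine (hcode _ (hC.iter_mem hx i) _ (hC.iter_mem hy i)).2 ?_
          rw [hC.iter hx, hC.iter hy]
          refine hxy _ ?_
          rw [abs_le]; omega
        simp only [hg, this, sub_self, abs_zero]
        exact hε.le
    rw [hgI, Metric.tendsto_atTop]
    intro ε hε
    obtain ⟨K, n0, hK⟩ := hC.averages_near_integral h h0 μ hμ hμD hgw hgi (ε := ε / 2)
      (by positivity)
    refine ⟨max K n0, fun k hk => ?_⟩
    have hl' : (0 : ℝ) < (Lv k).len := by exact_mod_cast (Lv k).len_pos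
    have := hne k
    have hU : (0 : ℝ) < Fintype.card {u // u ∈ (Lv k).words} := by
      exact_mod_cast Fintype.card_pos
    have hb : ∀ u, ∑ s ∈ Finset.range (Lv k).len,
        (if block n (xs k u) s = a then (1 : ℝ) else 0) = birkhoffSum f g (Lv k).len (pt k u) := by
      intro u
      refine Finset.sum_congr rfl fun s _ => ?_
      have : block n (xs k u) s = itin f name n (f^[s] (pt k u)) := by
        funext i
        simp only [block, itin, xs, ← Function.iterate_add_apply, add_comm]
      rw [this]
    have hest : ∀ u, |birkhoffSum f g (Lv k).len (pt k u) - (Lv k).len * ∫ y, g y ∂μ|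
        ≤ ε / 2 * (Lv k).len := fun u =>
      hK _ ((le_max_right _ _).trans (hk.trans (len_tendsto h k))) _
        ⟨(hpt k u).1, parsed_mono h ((le_max_left _ _).trans hk) (hpt k u).2⟩
    rw [Real.dist_eq, freq]
    simp_rw [hb]
    set I := ∫ y, g y ∂μ
    have e1 : (∑ u, birkhoffSum f g (Lv k).len (pt k u))
          / (Fintype.card {u // u ∈ (Lv k).words} * (Lv k).len) - I
        = (∑ u, (birkhoffSum f g (Lv k).len (pt k u) - (Lv k).len * I))
          / (Fintype.card {u // u ∈ (Lv k).words} * (Lv k).len) := by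
      rw [Finset.sum_sub_distrib, Finset.sum_const, Finset.card_univ, nsmul_eq_mul]
      field_simp
    rw [e1, abs_div, abs_of_pos (by positivity : (0 : ℝ) <
      Fintype.card {u // u ∈ (Lv k).words} * (Lv k).len), div_lt_iff₀ (by positivity)]
    refine ((Finset.abs_sum_le_sum_abs _ _).trans (Finset.sum_le_sum fun u _ => hest u)).trans_lt ?_
    rw [Finset.sum_const, Finset.card_univ, nsmul_eq_mul]
    have : 0 < (Fintype.card {u // u ∈ (Lv k).words} : ℝ) * (Lv k).len := by positivity
    nlinarith
  have hlim : Tendsto (fun k => ∑ a, EF.negMulLog (freq (Lv k).len n (xs k) a)) atTop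
      (𝓝 (refinedInfo f μ P n)) := by
    refine tendsto_finsetSum _ fun a _ => ?_
    have hc : Continuous EF.negMulLog := by
      have := Real.continuous_mul_log.neg
      exact this
    exact (hc.tendsto _).comp (hfreq a)
  have hlow : Tendsto (fun k => n * c
      - 2 * n ^ 2 * Real.log (Fintype.card {p // p ∈ P}) / (Lv k).len) atTop
      (𝓝 (n * c - 0)) := tendsto_const_nhds.sub (hlen.const_div_atTop _)
  rw [sub_zero] at hlow
  refine le_of_tendsto_of_tendsto' hlow hlim fun k => ?_
  have := hne k
  have hl' : (0 : ℝ) < (Lv k).len := by exact_mod_cast (Lv k).len_pos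
  have hinj : ∀ u v, (∀ i < (Lv k).len, xs k u i = xs k v i) → u = v := by
    intro u v huv
    refine Subtype.ext ((Lv k).inj _ u.2 _ v.2 fun i hi => ?_)
    have h1 := (hcode _ (hC.iter_mem (hpt k u).1 i) _ (hC.iter_mem (hpt k v).1 i)).1 (huv i hi)
    rw [hC.iter (hpt k u).1, hC.iter (hpt k v).1, hptH, hptH] at h1
    have h2 := periodic_apply u.1 0 hi
    have h3 := periodic_apply v.1 0 hi
    simp only [zero_mul] at h2 h3
    rw [← h2, ← h3]
    exact h1
  have hmain := log_card_le (x := xs k) hn (Lv k).len_pos hinj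
  have hbig : c * (Lv k).len ≤ Real.log (Fintype.card {u // u ∈ (Lv k).words}) := by
    rw [hcard, Real.le_log_iff_exp_le (by
      exact_mod_cast Finset.card_pos.2 (words_nonempty (Lv k)))]
    exact (Lv k).big.le
  have hn' : (0 : ℝ) ≤ n := Nat.cast_nonneg n
  have h5 := mul_le_mul_of_nonneg_left hbig hn'
  have h6 : ((n : ℝ) * c - 2 * n ^ 2 * Real.log (Fintype.card {p // p ∈ P}) / (Lv k).len)
      * (Lv k).len = n * (c * (Lv k).len) - 2 * n ^ 2 * Real.log (Fintype.card {p // p ∈ P}) := by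
    field_simp
  refine le_of_mul_le_mul_right ?_ hl'
  rw [h6]
  linarith

/-- Any invariant measure carried by the limit set has entropy at least `c`, already for the partition
by the symbol at `0`. -/
theorem Coding.le_measEntropy [Fintype B] [T2Space B] [MeasurableSpace X] [BorelSpace X]
    (hC : Coding f S Adj H) (hf : Measurable f) {Lv : ℕ → Level B c}
    (h : ∀ k, Refines (Lv k) (Lv (k + 1))) (h0 : ∀ z, Parsed (Lv 0) z → z ∈ vertexShift Adj)
    (μ : Measure X) [IsProbabilityMeasure μ] (hμ : MeasurePreserving f μ μ)
    (hμD : μ (limitSet S H Lv)ᶜ = 0) : (c : EReal) ≤ measEntropy f μ := by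
  obtain ⟨P, hP, hcode⟩ := hC.exists_partition
  obtain ⟨name, hname⟩ := exists_name hP
  refine le_trans ?_ (le_iSup₂_of_le P hP le_rfl)
  rw [EReal.coe_le_coe_iff, partEntropy]
  refine le_limsup_of_frequently_le (Eventually.frequently ?_) ?_
  · filter_upwards [eventually_ge_atTop 1] with n hn
    have hn' : (0 : ℝ) < n := by exact_mod_cast hn
    rw [le_div_iff₀ hn', mul_comm]
    exact hC.le_refinedInfo hf h h0 μ hμ hμD hP hname (hcode name hname) hn
  · refine ⟨Real.log P.card, ?_⟩
    rw [eventually_map]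
    filter_upwards [eventually_ge_atTop 1] with n hn
    have hn' : (0 : ℝ) < n := by exact_mod_cast hn
    rw [div_le_iff₀ hn', mul_comm]
    exact refinedInfo_le_card hP hf μ n

end LowerBound

/-! ### Shifts of finite type -/

section Assembly

/-- The main construction for a system coded by a vertex shift. -/
theorem Coding.exists_strictlyErgodic {X B : Type*} [MetricSpace X] [CompactSpace X]
    [MeasurableSpace X] [BorelSpace X] [TopologicalSpace B] [T2Space B] [Fintype B]
    {f : X → X} {S : Set X} {Adj : B → B → Prop} {H : X → ℤ → B} (hC : Coding f S Adj H)
    (hf : Continuous f) (hfi : Function.Injective f) {c : ℝ} (hc : 0 ≤ c)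
    (hent : (c : EReal) < topEntropyOn f S) :
    ∃ Y : Set X, Y ⊆ S ∧ IsCompact Y ∧ f '' Y = Y ∧ StrictlyErgodicOn f Y ∧
      topEntropyOn f Y = (c : EReal) ∧
      ∀ μ : Measure X, IsProbabilityMeasure μ → MeasurePreserving f μ μ → μ Yᶜ = 0 →
        Ergodic f μ ∧ measEntropy f μ = (c : EReal) := by
  obtain ⟨b, m, hm, hloops⟩ := hC.exists_loops hc hent
  obtain ⟨L0, hL0⟩ := exists_level_zero hm hloops
  obtain ⟨Lv, rfl, h⟩ := exists_hierarchy hc L0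
  obtain ⟨hDne, hDcl, hDinv⟩ := hC.limitSet_spec h hL0
  obtain ⟨Y, hYD, hYne, hYcl, hYinv, hYmin⟩ := exists_minimal_subset f hfi _ hDcl hDne hDinv
  obtain ⟨hle, hbdd⟩ := hC.entropy_limitSet_le hc h hYD
  have hnull : ∀ μ : Measure X, μ Yᶜ = 0 → μ (limitSet S H Lv)ᶜ = 0 := fun μ hμ =>
    measure_mono_null (compl_subset_compl.2 hYD) hμ
  have huniq : ∀ μ ν : Measure X, IsProbabilityMeasure μ → MeasurePreserving f μ μ → μ Yᶜ = 0 →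
      IsProbabilityMeasure ν → MeasurePreserving f ν ν → ν Yᶜ = 0 → ν = μ :=
    fun μ ν _ hμ hμY _ hν hνY =>
      hC.unique_measure h hL0 μ ν hμ hν (hnull μ hμY) (hnull ν hνY)
  have hlow : ∀ μ : Measure X, IsProbabilityMeasure μ → MeasurePreserving f μ μ → μ Yᶜ = 0 →
      (c : EReal) ≤ measEntropy f μ := fun μ _ hμ hμY =>
    hC.le_measEntropy hf.measurable h hL0 μ hμ (hnull μ hμY)
  have hup : ∀ μ : Measure X, IsProbabilityMeasure μ → MeasurePreserving f μ μ → μ Yᶜ = 0 →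
      measEntropy f μ ≤ topEntropyOn f Y := fun μ _ hμ hμY =>
    measEntropy_le hf.measurable Y hbdd μ hμ hμY
  obtain ⟨μ, hμp, hμ, hμY⟩ := exists_invariant_measure f hf Y hYcl hYne hYinv
  refine ⟨Y, fun x hx => (mem_iInter.1 (hYD hx) 0).1, hYcl.isCompact, hYinv,
    ⟨hYmin, μ, ⟨hμp, hμ, hμY⟩, fun ν hν => huniq μ ν hμp hμ hμY hν.1 hν.2.1 hν.2.2⟩,
    le_antisymm hle ((hlow μ hμp hμ hμY).trans (hup μ hμp hμ hμY)), fun ν hνp hν hνY => ⟨?_, ?_⟩⟩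
  · exact ergodic_of_unique f Y ν hν hνY fun ρ hρp hρ hρY => huniq ν ρ hνp hν hνY hρp hρ hρY
  · exact le_antisymm ((hup ν hνp hν hνY).trans hle) (hlow ν hνp hν hνY)

theorem topEntropyOn_empty_le {X : Type*} [MetricSpace X] (f : X → X) :
    topEntropyOn f ∅ ≤ 0 := by
  refine iSup₂_le fun ε _ => ?_
  have : ∀ n, sepCount f ∅ n ε = 0 := fun n => by
    have : {k : ℕ | ∃ Q : Finset X, ↑Q ⊆ (∅ : Set X) ∧ IsDynSep f n ε ↑Q ∧ Q.card = k} ⊆ {0} := by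
      rintro k ⟨Q, hQ, _, rfl⟩
      simpa using hQ
    unfold sepCount
    rcases Set.subset_singleton_iff_eq.1 this with h | h <;> rw [h] <;> simp
  simp [this]

theorem fullShift_injective (A : Type*) : Function.Injective (fullShift A) := fun x y hxy => by
  funext i
  have := congrFun hxy (i - 1)
  simpa [fullShift] using this

theorem continuous_fullShift (A : Type*) [MetricSpace A] : Continuous (fullShift A) :=
  continuous_pi fun i => continuous_apply (i + 1)

/-- A shift of finite type is coded by a vertex shift; a symbol of `B` is needed only to define the
code off `S`. -/
theorem coding_of_conj {A B : Type*} [MetricSpace A] [Finite A] [MetricSpace B]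
    {S : Set (ℤ → A)} (hS : IsSubshift S) (hne : S.Nonempty) {Adj : B → B → Prop}
    (hconj : ShiftConj S (vertexShift Adj)) :
    ∃ H : (ℤ → A) → ℤ → B, Coding (fullShift A) S Adj H := by
  classical
  obtain ⟨h, hh⟩ := hconj
  obtain ⟨x0, hx0⟩ := hne
  have hH : ∀ x (hx : x ∈ S), (if hx : x ∈ S then (h ⟨x, hx⟩ : ℤ → B) else h ⟨x0, hx0⟩)
      = h ⟨x, hx⟩ := fun x hx => dif_pos hx
  have hmaps : ∀ x ∈ S, fullShift A x ∈ S := fun x hx => by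
    have := mem_image_of_mem (fullShift A) hx
    rwa [hS.2] at this
  refine ⟨fun x => if hx : x ∈ S then (h ⟨x, hx⟩ : ℤ → B) else h ⟨x0, hx0⟩, ?_, hS.2, ?_, ?_, ?_,
    ?_, ?_⟩
  · exact hS.1.isCompact
  · intro x hx i
    rw [hH x hx, hH _ (hmaps x hx), hh ⟨x, hx⟩ ⟨_, hmaps x hx⟩ rfl]
    rfl
  · intro i
    rw [continuousOn_iff_continuous_domRestrict]
    have hc : Continuous fun x : S => (h x : ℤ → B) i :=
      (continuous_apply i).comp (continuous_subtype_val.comp h.continuous)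
    refine hc.congr fun x => ?_
    exact (congrFun (hH x.1 x.2) i).symm
  · intro x hx y hy hxy
    have hxy' : (h ⟨x, hx⟩ : ℤ → B) = h ⟨y, hy⟩ := by
      rw [← hH x hx, ← hH y hy]; exact hxy
    exact congrArg Subtype.val (h.injective (Subtype.ext hxy'))
  · intro x hx
    rw [hH x hx]
    exact (h ⟨x, hx⟩).2
  · intro z hz
    refine ⟨h.symm ⟨z, hz⟩, (h.symm ⟨z, hz⟩).2, ?_⟩
    rw [hH _ (h.symm ⟨z, hz⟩).2]
    simp

end Assembly

end EFProof

/-- Every shift of finite type has entropy flexibility: each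
intermediate entropy value is attained by a strictly ergodic subsystem, and by
its unique invariant measure. -/
theorem SFT_entropy_flexibility
    {A : Type*} [Fintype A] [MetricSpace A]
    [MeasurableSpace (ℤ → A)] [BorelSpace (ℤ → A)]
    (S : Set (ℤ → A)) (hSFT : IsSFT S) :
    (∀ c : ℝ, 0 ≤ c → (c : EReal) < topEntropyOn (fullShift A) S →
      ∃ Y : Set (ℤ → A), Y ⊆ S ∧ IsCompact Y ∧ fullShift A '' Y = Y ∧
        StrictlyErgodicOn (fullShift A) Y ∧
        topEntropyOn (fullShift A) Y = (c : EReal) ∧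
        ∀ μ : MeasureTheory.Measure (ℤ → A), MeasureTheory.IsProbabilityMeasure μ →
          MeasureTheory.MeasurePreserving (fullShift A) μ μ → μ Yᶜ = 0 →
            Ergodic (fullShift A) μ ∧ measEntropy (fullShift A) μ = (c : EReal)) ∧
    EntropyFlexibleOn (fullShift A) S := by
  have main : ∀ c : ℝ, 0 ≤ c → (c : EReal) < topEntropyOn (fullShift A) S →
      ∃ Y : Set (ℤ → A), Y ⊆ S ∧ IsCompact Y ∧ fullShift A '' Y = Y ∧
        StrictlyErgodicOn (fullShift A) Y ∧
        topEntropyOn (fullShift A) Y = (c : EReal) ∧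
        ∀ μ : MeasureTheory.Measure (ℤ → A), MeasureTheory.IsProbabilityMeasure μ →
          MeasureTheory.MeasurePreserving (fullShift A) μ μ → μ Yᶜ = 0 →
            Ergodic (fullShift A) μ ∧ measEntropy (fullShift A) μ = (c : EReal) := by
    intro c hc hent
    obtain ⟨hsub, B, hB, mB, Adj, hconj⟩ := hSFT
    rcases S.eq_empty_or_nonempty with rfl | hne
    · refine absurd hent (not_lt.2 ((EFProof.topEntropyOn_empty_le _).trans ?_))
      exact_mod_cast hc
    obtain ⟨H, hC⟩ := EFProof.coding_of_conj hsub hne hconj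
    exact hC.exists_strictlyErgodic (EFProof.continuous_fullShift A)
      (EFProof.fullShift_injective A) hc hent
  refine ⟨main, fun c hc hent => ?_⟩
  obtain ⟨Y, hYS, hYc, hYinv, ⟨hmin, μ, ⟨hμp, hμ, hμY⟩, huniq⟩, hYent, hall⟩ := main c hc hent
  exact ⟨μ, Y, hμp, (hall μ hμp hμ hμY).1, measure_mono_null (compl_subset_compl.2 hYS) hμY, hYS,
    hYc, hYinv, hYent, (hall μ hμp hμ hμY).2⟩
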